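/- arXiv:1511.03873 — 3 statements merged into one kernel-verified Lean document; each statement's English description precedes it below -/
import Mathlib

section
/- For every u ∈ C_c^∞(ℝ²;ℝ²) with div u = ∂₁u¹ + ∂₂u² = 0 on ℝ², one has ∫_{ℝ²} ((u(x)·∇)u(x)) · Δu(x) dx = 0, where (u·∇)u = u¹∂₁u + u²∂₂u and Δu = (Δu¹, Δu²) is the componentwise Laplacian. -/
open MeasureTheory Real Set Filter

noncomputable section

/-- Points of the plane `ℝ²`. -/
abbrev Plane := ℝ × ℝ

/-- The first standard basis vector of `ℝ²`. -/
def e1 : Plane := (1, 0)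

/-- The second standard basis vector of `ℝ²`. -/
def e2 : Plane := (0, 1)

/-- The Euclidean inner product on `ℝ²`. -/
def dot (a b : Plane) : ℝ := a.1 * b.1 + a.2 * b.2

/-- The squared Euclidean norm on `ℝ²`. -/
def nsq (a : Plane) : ℝ := a.1 ^ 2 + a.2 ^ 2

/-- The partial derivative `∂ᵢ` of a vector field `f : ℝ² → ℝ²` in the
direction `v`, i.e. `fderiv ℝ f x v`. -/
def pderiv' (f : Plane → Plane) (v : Plane) (x : Plane) : Plane := fderiv ℝ f x v

/-- The divergence `∂₁f¹ + ∂₂f²` of a (smooth) vector field. -/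
def diverg (f : Plane → Plane) (x : Plane) : ℝ :=
  (fderiv ℝ f x e1).1 + (fderiv ℝ f x e2).2

/-- The curl `∂₁f² − ∂₂f¹` of a (smooth) vector field. -/
def curl2 (f : Plane → Plane) (x : Plane) : ℝ :=
  (fderiv ℝ f x e1).2 - (fderiv ℝ f x e2).1

/-- The advection term `(u·∇)v = u¹∂₁v + u²∂₂v`. -/
def advect (u v : Plane → Plane) (x : Plane) : Plane :=
  (u x).1 • fderiv ℝ v x e1 + (u x).2 • fderiv ℝ v x e2

/-- The componentwise Laplacian `Δu = ∂₁∂₁u + ∂₂∂₂u`. -/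
def lap (u : Plane → Plane) (x : Plane) : Plane :=
  fderiv ℝ (fun y => fderiv ℝ u y e1) x e1 + fderiv ℝ (fun y => fderiv ℝ u y e2) x e2

/-- The squared pointwise Euclidean norm `|∇u|² = Σ_{i,j} (∂ⱼuⁱ)²` of the
gradient matrix of a (smooth) vector field. -/
def gradSq (u : Plane → Plane) (x : Plane) : ℝ :=
  nsq (fderiv ℝ u x e1) + nsq (fderiv ℝ u x e2)

/-- The `H¹(ℝ²;ℝ²)` norm `(∫ |f|² + ∫ |∇f|²)^{1/2}` of a smooth compactly
supported vector field. -/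
def h1norm (f : Plane → Plane) : ℝ :=
  Real.sqrt ((∫ x, nsq (f x)) + ∫ x, gradSq f x)

lemma int_fderiv_zero (F : Plane → ℝ) (hF : ContDiff ℝ 1 F) (hs : HasCompactSupport F)
    (v : Plane) : Integrable (fun x => fderiv ℝ F x v) ∧ ∫ x, fderiv ℝ F x v = 0 := by
  have hc : Continuous (fun x => fderiv ℝ F x v) :=
    (hF.continuous_fderiv (by norm_num)).clm_apply continuous_const
  have hs' : HasCompactSupport (fun x => fderiv ℝ F x v) := hs.fderiv_apply ℝ v
  have hi := hc.integrable_of_hasCompactSupport hs' (μ := volume)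
  refine ⟨hi, ?_⟩
  have h := integral_mul_fderiv_eq_neg_fderiv_mul_of_integrable (𝕜 := ℝ) (μ := (volume : Measure Plane))
    (f := fun _ : Plane => (1:ℝ)) (g := F) (v := v) (by simp) (by simpa using hi)
    (by simpa using hF.continuous.integrable_of_hasCompactSupport hs)
    (fun x _ => by fun_prop) (fun x _ => hF.differentiable (by norm_num) x)
  simpa using h

/-- orthogonality relation (2.13), specific to 2D:
for every divergence-free `u ∈ C_c^∞(ℝ²;ℝ²)`,
`∫ ((u·∇)u) · Δu dx = 0`. -/
theorem statement15 (u : Plane → Plane)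
    (hu : ContDiff ℝ (⊤ : ℕ∞) u) (hsupp : HasCompactSupport u)
    (hdiv : ∀ x, diverg u x = 0) :
    ∫ x, dot (advect u u x) (lap u x) = 0 := by
  have hD : ContDiff ℝ (⊤ : ℕ∞) (fderiv ℝ u) := hu.fderiv_right (by simp)
  obtain ⟨P, hP⟩ : ∃ P : Plane → Plane, P = fun y => fderiv ℝ u y e1 := ⟨_, rfl⟩
  obtain ⟨Q, hQ⟩ : ∃ Q : Plane → Plane, Q = fun y => fderiv ℝ u y e2 := ⟨_, rfl⟩
  have cP : ContDiff ℝ (⊤ : ℕ∞) P := by rw [hP]; exact hD.clm_apply contDiff_const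
  have cQ : ContDiff ℝ (⊤ : ℕ∞) Q := by rw [hQ]; exact hD.clm_apply contDiff_const
  have du : Differentiable ℝ u := hu.differentiable (by simp)
  have dP : Differentiable ℝ P := cP.differentiable (by simp)
  have dQ : Differentiable ℝ Q := cQ.differentiable (by simp)
  have dD : Differentiable ℝ (fderiv ℝ u) := hD.differentiable (by simp)
  have hsymm : ∀ x, fderiv ℝ P x e2 = fderiv ℝ Q x e1 := by
    intro x
    have h := (hu.contDiffAt (x := x)).isSymmSndFDerivAt (by simp only [minSmoothness_of_isRCLikeNormedField]; exact WithTop.coe_le_coe.2 (le_top : (2 : ℕ∞) ≤ ⊤))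
    have h2 := h e2 e1
    rw [hP, hQ, fderiv_clm_apply (dD x) (by fun_prop), fderiv_clm_apply (dD x) (by fun_prop)]
    simpa using h2
  have hdiv0 : ∀ x, (P x).1 + (Q x).2 = 0 := by
    intro x; rw [hP, hQ]; exact hdiv x
  have hdiv1 : ∀ x v, (fderiv ℝ P x v).1 + (fderiv ℝ Q x v).2 = 0 := by
    intro x v
    have h1 : HasFDerivAt (fun x => (P x).1 + (Q x).2) _ x :=
      (dP x).hasFDerivAt.fst.add (dQ x).hasFDerivAt.snd
    have h2 : (fun x => (P x).1 + (Q x).2) = fun _ => (0:ℝ) := funext hdiv0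
    rw [h2] at h1
    have h3 := h1.unique (hasFDerivAt_const (0:ℝ) x)
    simpa using congrArg (fun L => L v) h3
  let F : Plane → ℝ := fun x => ((u x).1 * (P x).2 + (u x).2 * (Q x).2) * ((P x).2 - (Q x).1)
    - (1/2) * ((u x).1 * (((P x).2 - (Q x).1) * ((P x).2 - (Q x).1)))
  let G : Plane → ℝ := fun x => -(((u x).1 * (P x).1 + (u x).2 * (Q x).1) * ((P x).2 - (Q x).1))
    - (1/2) * ((u x).2 * (((P x).2 - (Q x).1) * ((P x).2 - (Q x).1)))
  have cu1 : ContDiff ℝ 1 u := hu.of_le (by simp)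
  have cP1 : ContDiff ℝ 1 P := cP.of_le (by simp)
  have cQ1 : ContDiff ℝ 1 Q := cQ.of_le (by simp)
  have cF : ContDiff ℝ 1 F := by fun_prop
  have cG : ContDiff ℝ 1 G := by fun_prop
  have sF : HasCompactSupport F := hsupp.mono (by
    intro x hx h0; apply hx; simp [F, h0])
  have sG : HasCompactSupport G := hsupp.mono (by
    intro x hx h0; apply hx; simp [G, h0])
  have key : ∀ x, dot (advect u u x) (lap u x) = fderiv ℝ F x e1 + fderiv ℝ G x e2 := by
    intro x
    have u1 := (du x).hasFDerivAt.fst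
    have u2 := (du x).hasFDerivAt.snd
    have p1 := (dP x).hasFDerivAt.fst
    have p2 := (dP x).hasFDerivAt.snd
    have q1 := (dQ x).hasFDerivAt.fst
    have q2 := (dQ x).hasFDerivAt.snd
    have w := p2.sub q1
    have hF : HasFDerivAt F _ x :=
      (((u1.mul p2).add (u2.mul q2)).mul w).sub ((u1.mul (w.mul w)).const_mul (1/2))
    have hG : HasFDerivAt G _ x :=
      (((u1.mul p1).add (u2.mul q1)).mul w).neg.sub ((u2.mul (w.mul w)).const_mul (1/2))
    rw [hF.fderiv, hG.fderiv]
    have a1 : fderiv ℝ u x e1 = P x := by rw [hP]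
    have a2 : fderiv ℝ u x e2 = Q x := by rw [hQ]
    have d0 := hdiv0 x
    have d1 := hdiv1 x e1
    have d2 := hdiv1 x e2
    simp only [dot, advect, lap, ← hP, ← hQ]
    rw [hsymm x] at *
    simp [a1, a2, hsymm x]
    generalize P x = p at *
    generalize Q x = q at *
    generalize u x = r at *
    generalize fderiv ℝ P x e1 = p1 at *
    generalize fderiv ℝ Q x e1 = m at *
    generalize fderiv ℝ Q x e2 = q2 at *
    have e0 : q.2 = - p.1 := by linarith
    have e3 : p1.1 = - m.2 := by linarith
    have e4 : q2.2 = - m.1 := by linarith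
    rw [e0, e3, e4]
    ring
  simp_rw [key]
  have h1 := int_fderiv_zero F cF sF e1
  have h2 := int_fderiv_zero G cG sG e2
  rw [integral_add h1.1 h2.1, h1.2, h2.2, add_zero]
end
end

section
/- Let M > 0, K > 1, C > 0, and let E : [0,M] → ℝ be continuous, nonnegative, satisfy E(t) < K for all t ∈ [0,M], be differentiable on (0,M), and satisfy E(0) = 0 together with the differential inequality E′(t) ≤ C · E(t) · ln(K/E(t)) at every t ∈ (0,M) with E(t) > 0. Then E(t) = 0 for all t ∈ [0,M]. -/
open Real Set

/-- Osgood-type uniqueness lemma underlying the Yudovich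
argument.  Let `M > 0`, `K > 1`, `C > 0`, and let `E : [0,M] → ℝ` be
continuous, nonnegative, satisfy `E(t) < K` on `[0,M]`, be differentiable on
`(0,M)`, with `E(0) = 0` and `E′(t) ≤ C·E(t)·ln(K/E(t))` at every point of
`(0,M)` where `E(t) > 0`.  Then `E ≡ 0` on `[0,M]`. -/
theorem statement18 (M K C : ℝ) (hM : 0 < M) (hK : 1 < K) (hC : 0 < C)
    (E : ℝ → ℝ)
    (hcont : ContinuousOn E (Set.Icc 0 M))
    (hnonneg : ∀ t ∈ Set.Icc (0 : ℝ) M, 0 ≤ E t)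
    (hlt : ∀ t ∈ Set.Icc (0 : ℝ) M, E t < K)
    (hdiff : ∀ t ∈ Set.Ioo (0 : ℝ) M, DifferentiableAt ℝ E t)
    (h0 : E 0 = 0)
    (hineq : ∀ t ∈ Set.Ioo (0 : ℝ) M, 0 < E t →
      deriv E t ≤ C * E t * Real.log (K / E t)) :
    ∀ t ∈ Set.Icc (0 : ℝ) M, E t = 0 := by
  intro t1 ht1
  by_contra hne
  have hpos1 : 0 < E t1 := lt_of_le_of_ne (hnonneg t1 ht1) (Ne.symm hne)
  have hsub : Icc 0 t1 ⊆ Icc 0 M := Icc_subset_Icc_right ht1.2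
  have hZc : IsCompact (Icc 0 t1 ∩ E ⁻¹' {0}) :=
    isCompact_Icc.of_isClosed_subset
      ((hcont.mono hsub).preimage_isClosed_of_isClosed isClosed_Icc isClosed_singleton)
      inter_subset_left
  obtain ⟨s, ⟨hs, hEs⟩, hmax⟩ := hZc.exists_isGreatest ⟨0, ⟨le_refl _, ht1.1⟩, h0⟩
  have hEs : E s = 0 := hEs
  have hst : s < t1 := by
    rcases lt_or_eq_of_le hs.2 with h | h
    · exact h
    · rw [h] at hEs; exact absurd hEs hne
  have hmem : ∀ t ∈ Ioc s t1, t ∈ Icc 0 M := fun t ht =>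
    ⟨hs.1.trans ht.1.le, ht.2.trans ht1.2⟩
  have hpos : ∀ t ∈ Ioc s t1, 0 < E t := by
    intro t ht
    refine lt_of_le_of_ne (hnonneg t (hmem t ht)) fun h => ?_
    have : t ≤ s := hmax ⟨⟨hs.1.trans ht.1.le, ht.2⟩, h.symm⟩
    exact absurd ht.1 (not_lt.mpr this)
  have hKp : 0 < K := by linarith
  have hder : ∀ t ∈ Ioo s t1, HasDerivAt (fun t => (Real.log K - Real.log (E t)) * Real.exp (C * t))
      ((0 - deriv E t / E t) * Real.exp (C * t)
        + (Real.log K - Real.log (E t)) * (Real.exp (C * t) * (C * 1))) t := by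
    intro t ht
    have hd := (hdiff t ⟨lt_of_le_of_lt hs.1 ht.1, lt_of_lt_of_le ht.2 ht1.2⟩).hasDerivAt
    exact ((hasDerivAt_const t _).sub (hd.log (hpos t ⟨ht.1, ht.2.le⟩).ne')).mul
      (((hasDerivAt_id t).const_mul C).exp)
  have hmono : MonotoneOn (fun t => (Real.log K - Real.log (E t)) * Real.exp (C * t)) (Ioc s t1) := by
    apply monotoneOn_of_deriv_nonneg (convex_Ioc s t1)
    · refine ContinuousOn.mul (continuousOn_const.sub
        (ContinuousOn.log (hcont.mono hmem) fun t ht => (hpos t ht).ne')) (by fun_prop)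
    · rw [interior_Ioc]
      exact fun t ht => (hder t ht).differentiableAt.differentiableWithinAt
    · rw [interior_Ioc]
      intro t ht
      rw [(hder t ht).deriv]
      have hp := hpos t ⟨ht.1, ht.2.le⟩
      have hi := hineq t ⟨lt_of_le_of_lt hs.1 ht.1, lt_of_lt_of_le ht.2 ht1.2⟩ hp
      rw [Real.log_div hKp.ne' hp.ne'] at hi
      have h2 : deriv E t / E t ≤ C * (Real.log K - Real.log (E t)) := by
        rw [div_le_iff₀ hp]; linarith
      have := mul_nonneg (sub_nonneg.mpr h2) (Real.exp_pos (C * t)).le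
      linarith
  set B := (Real.log K - Real.log (E t1)) * Real.exp (C * t1) with hB
  have hlow : ∀ t ∈ Ioc s t1, Real.exp (Real.log K - B) ≤ E t := by
    intro t ht
    have h1 := hmono ht ⟨hst, le_refl _⟩ ht.2
    have h1 : (Real.log K - Real.log (E t)) * Real.exp (C * t) ≤ B := h1
    have h3 : 0 ≤ Real.log K - Real.log (E t) :=
      sub_nonneg.mpr (Real.log_le_log (hpos t ht) (hlt t (hmem t ht)).le)
    have h4 : 1 ≤ Real.exp (C * t) :=
      Real.one_le_exp (mul_nonneg hC.le (hmem t ht).1)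
    rw [← Real.le_log_iff_exp_le (hpos t ht)]
    nlinarith [le_mul_of_one_le_right h3 h4]
  have hcs : ContinuousWithinAt E (Ioc s t1) s := (hcont s (hsub hs)).mono hmem
  have : (nhdsWithin s (Ioc s t1)).NeBot := by
    rw [nhdsWithin_Ioc_eq_nhdsGT hst]; infer_instance
  have hfin : Real.exp (Real.log K - B) ≤ E s :=
    ge_of_tendsto hcs (Filter.eventually_of_mem self_mem_nhdsWithin hlow)
  rw [hEs] at hfin
  exact absurd (Real.exp_pos _) (not_lt.mpr hfin)
end

section
/- There exists a constant c > 0 such that for every p ∈ (1,∞) and every u ∈ C_c^∞(ℝ²;ℝ²) with div u = ∂₁u¹ + ∂₂u² = 0 on ℝ², one has ‖∇u‖_{L^p(ℝ²)} ≤ c · (p²/(p−1)) · ‖curl u‖_{L^p(ℝ²)}, where curl u = ∂₁u² − ∂₂u¹. -/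
open MeasureTheory Real Set Filter

noncomputable section

/-- convolution -/
def cv (f k : Plane → ℝ) (x : Plane) : ℝ := ∫ y, f y * k (x - y)

/-- direction -/
def dir (i : Bool) : Plane := if i then e2 else e1
/-- coordinate -/
def co (i : Bool) (z : Plane) : ℝ := if i then z.2 else z.1

def KK (t : ℝ) (z : Plane) : ℝ := (4 * π * t)⁻¹ * Real.exp (-(nsq z) / (4 * t))
def Kd (i : Bool) (t : ℝ) (z : Plane) : ℝ := (-(co i z) / (2 * t)) * KK t z
def Kdd (i : Bool) (t : ℝ) (z : Plane) : ℝ := ((co i z)^2 / (4 * t^2) - 1 / (2 * t)) * KK t z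

lemma nsq_nonneg (z : Plane) : 0 ≤ nsq z := by unfold nsq; positivity

lemma continuous_nsq : Continuous nsq := by unfold nsq; fun_prop

lemma continuous_co (i : Bool) : Continuous (co i) := by
  cases i
  · exact continuous_fst
  · exact continuous_snd

lemma KK_pos {t : ℝ} (ht : 0 < t) (z : Plane) : 0 < KK t z := by unfold KK; positivity

lemma KK_cont (t : ℝ) : Continuous (KK t) := by
  unfold KK; have := continuous_nsq; fun_prop
lemma Kd_cont (i : Bool) (t : ℝ) : Continuous (Kd i t) := by
  unfold Kd; have := KK_cont t; have := continuous_co i; fun_prop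
lemma Kdd_cont (i : Bool) (t : ℝ) : Continuous (Kdd i t) := by
  unfold Kdd; have := KK_cont t; have := continuous_co i; fun_prop

lemma KK_contOn : ContinuousOn (Function.uncurry KK) (Ioi 0 ×ˢ univ) := by
  have := continuous_nsq
  unfold KK Function.uncurry
  apply ContinuousOn.mul
  · apply ContinuousOn.inv₀ (by fun_prop)
    rintro ⟨t, z⟩ h; simp at h ⊢; exact h.ne'
  · apply Real.continuous_exp.comp_continuousOn
    apply ContinuousOn.div (by fun_prop) (by fun_prop)
    rintro ⟨t, z⟩ h; simp at h ⊢; exact h.ne'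

lemma Kdd_contOn (i : Bool) : ContinuousOn (Function.uncurry (Kdd i)) (Ioi 0 ×ˢ univ) := by
  have := continuous_co i
  have h := KK_contOn
  unfold Kdd Function.uncurry
  apply ContinuousOn.mul _ h
  apply ContinuousOn.sub
  · apply ContinuousOn.div (by fun_prop) (by fun_prop)
    rintro ⟨t, z⟩ h; simp at h ⊢; exact h.ne'
  · apply ContinuousOn.div (by fun_prop) (by fun_prop)
    rintro ⟨t, z⟩ h; simp at h ⊢; exact h.ne'

lemma KK_time {t : ℝ} (ht : 0 < t) (z : Plane) :
    HasDerivAt (fun s => KK s z) (Kdd false t z + Kdd true t z) t := by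
  unfold KK
  have h1 : HasDerivAt (fun s : ℝ => (4 * π * s)⁻¹) (-(4*π) / (4 * π * t)^2) t := by
    have : HasDerivAt (fun s : ℝ => 4 * π * s) (4 * π) t := by
      simpa using (hasDerivAt_id t).const_mul (4 * π)
    exact this.inv (by positivity)
  have h2 : HasDerivAt (fun s : ℝ => -(nsq z) / (4 * s)) (nsq z / (4 * t^2)) t := by
    have h0 : HasDerivAt (fun s : ℝ => 4 * s) 4 t := by
      simpa using (hasDerivAt_id t).const_mul (4 : ℝ)
    have := (hasDerivAt_const t (-(nsq z))).div h0 (by positivity)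
    convert! this using 1
    field_simp
    ring
  convert! h1.mul h2.exp using 1
  simp [Kdd, KK, co]
  unfold nsq
  field_simp
  ring

lemma nsq_line (i : Bool) (z : Plane) (s : ℝ) :
    nsq (z + s • dir i) = nsq z + 2 * s * co i z + s^2 := by
  cases i <;> simp [nsq, dir, co, e1, e2] <;> ring

lemma co_line (i : Bool) (z : Plane) (s : ℝ) : co i (z + s • dir i) = co i z + s := by
  cases i <;> simp [dir, co, e1, e2]

lemma KK_line (i : Bool) (t : ℝ) (z : Plane) :
    HasDerivAt (fun s : ℝ => KK t (z + s • dir i)) (Kd i t z) 0 := by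
  unfold KK
  simp only [nsq_line]
  have h2 : HasDerivAt (fun s : ℝ => -(nsq z + 2 * s * co i z + s^2) / (4 * t))
      (-(2 * co i z) / (4 * t)) 0 := by
    apply HasDerivAt.div_const
    apply HasDerivAt.neg
    have h := ((hasDerivAt_const (0:ℝ) (nsq z)).add
      (((hasDerivAt_id (0:ℝ)).const_mul 2).mul_const (co i z))).add ((hasDerivAt_id (0:ℝ)).pow 2)
    convert! h using 1
    simp
  convert! (h2.exp).const_mul _ using 1
  simp [Kd, KK]
  rcases eq_or_ne t 0 with rfl | h
  · simp
  field_simp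
  ring

lemma Kd_line (i : Bool) (t : ℝ) (z : Plane) :
    HasDerivAt (fun s : ℝ => Kd i t (z + s • dir i)) (Kdd i t z) 0 := by
  unfold Kd
  simp only [co_line]
  have h1 : HasDerivAt (fun s : ℝ => -(co i z + s) / (2 * t)) (-1 / (2*t)) 0 := by
    apply HasDerivAt.div_const
    apply HasDerivAt.neg
    exact (hasDerivAt_id (0:ℝ)).const_add (co i z)
  convert! h1.mul (KK_line i t z) using 1
  simp [Kdd, Kd]
  rcases eq_or_ne t 0 with rfl | h
  · simp [KK]
  field_simp
  ring

lemma pint_deriv {f : Plane → ℝ} (hf : Continuous f) (hc : HasCompactSupport f)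
    {k k' : ℝ → Plane → ℝ} {s₀ r : ℝ} (hr : 0 < r)
    (hk : ∀ s ∈ Metric.closedBall s₀ r, Continuous (k s))
    (hk' : ContinuousOn (Function.uncurry k') (Metric.closedBall s₀ r ×ˢ univ))
    (hd : ∀ s ∈ Metric.closedBall s₀ r, ∀ y, HasDerivAt (fun s => k s y) (k' s y) s) :
    HasDerivAt (fun s => ∫ y, f y * k s y) (∫ y, f y * k' s₀ y) s₀ := by
  have hcpt : IsCompact (Metric.closedBall s₀ r ×ˢ tsupport f) :=
    (isCompact_closedBall s₀ r).prod hc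
  obtain ⟨M, hM⟩ := (hcpt.bddAbove_image
    ((hk'.mono (prod_mono_right (subset_univ _))).norm))
  have h0 : s₀ ∈ Metric.closedBall s₀ r := by simp [hr.le]
  have hk0 : Continuous (k' s₀) := by
    have : ContinuousOn (fun y => Function.uncurry k' (s₀, y)) univ :=
      hk'.comp (by fun_prop) (fun y _ => ⟨h0, mem_univ _⟩)
    exact continuousOn_univ.1 this
  refine (hasDerivAt_integral_of_dominated_loc_of_deriv_le (μ := volume)
    (F := fun s y => f y * k s y) (F' := fun s y => f y * k' s y)
    (bound := fun y => |f y| * M) (Metric.closedBall_mem_nhds s₀ hr) ?_ ?_ ?_ ?_ ?_ ?_).2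
  · filter_upwards [Metric.closedBall_mem_nhds s₀ hr] with s hs
    exact (hf.mul (hk s hs)).aestronglyMeasurable
  · exact (hf.mul (hk s₀ h0)).integrable_of_hasCompactSupport hc.mul_right
  · exact (hf.mul hk0).aestronglyMeasurable
  · refine Eventually.of_forall fun y s hs => ?_
    rw [norm_mul]
    by_cases hy : y ∈ tsupport f
    · exact mul_le_mul_of_nonneg_left (hM ⟨(s, y), ⟨hs, hy⟩, rfl⟩) (norm_nonneg _)
    · simp [image_eq_zero_of_notMem_tsupport hy]
  · exact ((hf.integrable_of_hasCompactSupport hc).abs).mul_const M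
  · exact Eventually.of_forall fun y s hs => (hd s hs y).const_mul (f y)

lemma cv_cont {f k : Plane → ℝ} (hf : Continuous f) (hc : HasCompactSupport f)
    (hk : Continuous k) : Continuous (cv f k) := by
  have h := continuous_parametric_integral_of_continuous (μ := (volume : Measure Plane))
    (f := fun (x : Plane) (y : Plane) => f y * k (x - y)) (by unfold Function.uncurry; fun_prop)
    (s := tsupport f) hc
  convert! h using 1
  ext x
  unfold cv
  rw [setIntegral_eq_integral_of_forall_compl_eq_zero]
  intro y hy
  simp [image_eq_zero_of_notMem_tsupport hy]

lemma cv_line {f k k' : Plane → ℝ} (hf : Continuous f) (hc : HasCompactSupport f)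
    (hk : Continuous k) (hk' : Continuous k') {v : Plane}
    (hd : ∀ z, HasDerivAt (fun s : ℝ => k (z + s • v)) (k' z) 0) (x : Plane) :
    HasLineDerivAt ℝ (cv f k) (cv f k' x) x v := by
  unfold HasLineDerivAt cv
  have := pint_deriv hf hc (k := fun s y => k (x + s • v - y))
    (k' := fun s y => k' (x + s • v - y)) (s₀ := 0) (r := 1) one_pos
    (fun s _ => by fun_prop) (by unfold Function.uncurry; fun_prop) ?_
  · simpa using this
  intro s _ y
  have h := hd (x + s • v - y)
  have h2 : HasDerivAt (fun s' : ℝ => s' - s) 1 s := (hasDerivAt_id s).sub_const s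
  have h3 := h.comp_of_eq s h2 (by simp)
  convert! h3 using 1
  · ext s'
    simp only [Function.comp]
    congr 1
    rw [sub_smul]; abel
  · simp

lemma cv_time {f : Plane → ℝ} (hf : Continuous f) (hc : HasCompactSupport f) {t : ℝ}
    (ht : 0 < t) (x : Plane) :
    HasDerivAt (fun s => cv f (KK s) x) (cv f (Kdd false t) x + cv f (Kdd true t) x) t := by
  have hsub : Metric.closedBall t (t/2) ⊆ Ioi 0 := by
    intro s hs
    rw [Metric.mem_closedBall, Real.dist_eq, abs_le] at hs
    simp; linarith
  have := pint_deriv hf hc (k := fun s y => KK s (x - y))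
    (k' := fun s y => Kdd false s (x - y) + Kdd true s (x - y)) (s₀ := t) (r := t/2) (by positivity)
    (fun s _ => by have := KK_cont s; fun_prop) ?_ ?_
  · unfold cv
    rw [← integral_add]
    · simpa [mul_add] using this
    · exact (hf.mul (by have := Kdd_cont false t; fun_prop)).integrable_of_hasCompactSupport hc.mul_right
    · exact (hf.mul (by have := Kdd_cont true t; fun_prop)).integrable_of_hasCompactSupport hc.mul_right
  · have h1 : ∀ i, ContinuousOn (fun q : ℝ × Plane => Function.uncurry (Kdd i) (q.1, x - q.2))
        (Metric.closedBall t (t/2) ×ˢ univ) := fun i =>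
      (Kdd_contOn i).comp (by fun_prop) (fun q hq => ⟨hsub hq.1, mem_univ _⟩)
    exact (h1 false).add (h1 true)
  · intro s hs y
    exact KK_time (hsub hs) (x - y)

/-- Gaussian-dominated, uniformly in time -/
def UGB (I : Set ℝ) (F : ℝ → Plane → ℝ) : Prop :=
  ∃ C c : ℝ, 0 ≤ C ∧ 0 < c ∧ ∀ t ∈ I, ∀ x, |F t x| ≤ C * Real.exp (-c * nsq x)

lemma UGB.mono {I : Set ℝ} {F G : ℝ → Plane → ℝ} (hG : UGB I G)
    (h : ∀ t ∈ I, ∀ x, |F t x| ≤ |G t x|) : UGB I F := by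
  obtain ⟨C, c, h1, h2, h3⟩ := hG
  exact ⟨C, c, h1, h2, fun t ht x => (h t ht x).trans (h3 t ht x)⟩

lemma UGB.add {I : Set ℝ} {F G : ℝ → Plane → ℝ} (hF : UGB I F) (hG : UGB I G) :
    UGB I (fun t x => F t x + G t x) := by
  obtain ⟨C, c, h1, h2, h3⟩ := hF
  obtain ⟨C', c', h1', h2', h3'⟩ := hG
  refine ⟨C + C', min c c', by positivity, lt_min h2 h2', fun t ht x => ?_⟩
  have hn := nsq_nonneg x
  have e1 : Real.exp (-c * nsq x) ≤ Real.exp (-(min c c') * nsq x) := by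
    apply Real.exp_le_exp.2; nlinarith [min_le_left c c']
  have e2 : Real.exp (-c' * nsq x) ≤ Real.exp (-(min c c') * nsq x) := by
    apply Real.exp_le_exp.2; nlinarith [min_le_right c c']
  calc _ ≤ |F t x| + |G t x| := abs_add_le _ _
    _ ≤ C * Real.exp (-c * nsq x) + C' * Real.exp (-c' * nsq x) := add_le_add (h3 t ht x) (h3' t ht x)
    _ ≤ _ := by rw [add_mul]; gcongr

lemma UGB.mul {I : Set ℝ} {F G : ℝ → Plane → ℝ} (hF : UGB I F) (hG : UGB I G) :
    UGB I (fun t x => F t x * G t x) := by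
  obtain ⟨C, c, h1, h2, h3⟩ := hF
  obtain ⟨C', c', h1', h2', h3'⟩ := hG
  refine ⟨C * C', c + c', by positivity, by positivity, fun t ht x => ?_⟩
  calc _ = |F t x| * |G t x| := abs_mul _ _
    _ ≤ (C * Real.exp (-c * nsq x)) * (C' * Real.exp (-c' * nsq x)) :=
      mul_le_mul (h3 t ht x) (h3' t ht x) (abs_nonneg _) (by positivity)
    _ = _ := by rw [neg_add, add_mul, Real.exp_add]; ring

lemma UGB.neg {I : Set ℝ} {F : ℝ → Plane → ℝ} (hF : UGB I F) :
    UGB I (fun t x => - F t x) := hF.mono (fun t _ x => by simp)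

lemma UGB.const_mul {I : Set ℝ} {F : ℝ → Plane → ℝ} (hF : UGB I F) (a : ℝ) :
    UGB I (fun t x => a * F t x) := by
  obtain ⟨C, c, h1, h2, h3⟩ := hF
  refine ⟨|a| * C, c, by positivity, h2, fun t ht x => ?_⟩
  rw [abs_mul, mul_assoc]
  exact mul_le_mul_of_nonneg_left (h3 t ht x) (abs_nonneg _)

lemma UGB.poly {I : Set ℝ} {F : ℝ → Plane → ℝ} (hF : UGB I F) :
    UGB I (fun t x => (1 + nsq x)^2 * F t x) := by
  obtain ⟨C, c, h1, h2, h3⟩ := hF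
  refine ⟨(1 + 4/c)^2 * C, c/2, by positivity, by positivity, fun t ht x => ?_⟩
  have hn := nsq_nonneg x
  have h5 : 1 + nsq x ≤ (1 + 4/c) * Real.exp (c/4 * nsq x) := by
    have e1 := Real.add_one_le_exp (c/4 * nsq x)
    have e2 : nsq x = 4/c * (c/4 * nsq x) := by field_simp
    have e3 : 1 ≤ Real.exp (c/4 * nsq x) := Real.one_le_exp (by positivity)
    have e4 : 0 ≤ 4/c := by positivity
    nlinarith
  rw [abs_mul, abs_of_nonneg (by positivity : (0:ℝ) ≤ (1 + nsq x)^2)]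
  calc _ ≤ ((1 + 4/c) * Real.exp (c/4 * nsq x))^2 * (C * Real.exp (-c * nsq x)) :=
        mul_le_mul (pow_le_pow_left₀ (by positivity) h5 2) (h3 t ht x) (abs_nonneg _) (by positivity)
    _ = (1 + 4/c)^2 * C * (Real.exp (c/4 * nsq x) * Real.exp (c/4 * nsq x) * Real.exp (-c * nsq x)) := by ring
    _ = _ := by rw [← Real.exp_add, ← Real.exp_add]; ring_nf

lemma UGB.rpow {I : Set ℝ} {F : ℝ → Plane → ℝ} (hF : UGB I F) {p : ℝ} (hp : 0 < p)
    (h0 : ∀ t ∈ I, ∀ x, 0 ≤ F t x) :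
    UGB I (fun t x => (F t x) ^ p) := by
  obtain ⟨C, c, h1, h2, h3⟩ := hF
  refine ⟨C ^ p, c * p, by positivity, by positivity, fun t ht x => ?_⟩
  rw [abs_of_nonneg (Real.rpow_nonneg (h0 t ht x) _)]
  have := h3 t ht x
  rw [abs_of_nonneg (h0 t ht x)] at this
  calc _ ≤ (C * Real.exp (-c * nsq x)) ^ p := Real.rpow_le_rpow (h0 t ht x) this hp.le
    _ = _ := by
      rw [Real.mul_rpow h1 (Real.exp_pos _).le, ← Real.exp_mul]; ring_nf

lemma gauss_prod (c : ℝ) (x : Plane) :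
    Real.exp (-c * nsq x) = Real.exp (-c * x.1^2) * Real.exp (-c * x.2^2) := by
  rw [← Real.exp_add]; congr 1; simp only [nsq]; ring

lemma gauss_int {c : ℝ} (hc : 0 < c) : Integrable (fun x : Plane => Real.exp (-c * nsq x)) := by
  simp only [gauss_prod]
  exact (integrable_exp_neg_mul_sq hc).mul_prod (integrable_exp_neg_mul_sq hc)

lemma KK_int {t : ℝ} (ht : 0 < t) : Integrable (KK t) := by
  unfold KK
  have := (gauss_int (c := 1 / (4*t)) (by positivity)).const_mul ((4 * π * t)⁻¹)
  refine this.congr (Eventually.of_forall fun x => ?_)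
  simp only
  congr 2
  ring

lemma KK_mass {t : ℝ} (ht : 0 < t) : ∫ x, KK t x = 1 := by
  have : ∀ x : Plane, KK t x = (4 * π * t)⁻¹ * (Real.exp (-(1/(4*t)) * x.1^2) * Real.exp (-(1/(4*t)) * x.2^2)) := by
    intro x; rw [← gauss_prod]; unfold KK; congr 2; ring
  simp only [this]
  rw [integral_const_mul]
  have h := integral_prod_mul (μ := (volume : Measure ℝ)) (ν := (volume : Measure ℝ)) (fun x : ℝ => Real.exp (-(1/(4*t)) * x^2)) (fun x : ℝ => Real.exp (-(1/(4*t)) * x^2))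
  rw [← Measure.volume_eq_prod] at h
  rw [h, integral_gaussian, Real.mul_self_sqrt (by positivity)]
  field_simp

lemma UGB.integrable {I : Set ℝ} {F : ℝ → Plane → ℝ} (hF : UGB I F) {t : ℝ} (ht : t ∈ I)
    (hc : Continuous (F t)) : Integrable (F t) := by
  obtain ⟨C, c, h1, h2, h3⟩ := hF
  exact ((gauss_int h2).const_mul C).mono' hc.aestronglyMeasurable
    (Eventually.of_forall fun x => h3 t ht x)

lemma ibp_mul {F F' G G' : Plane → ℝ} {v : Plane} (h1 : Integrable (fun x => F' x * G x))
    (h2 : Integrable (fun x => F x * G' x)) (h3 : Integrable (fun x => F x * G x))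
    (hF : ∀ x, HasLineDerivAt ℝ F (F' x) x v) (hG : ∀ x, HasLineDerivAt ℝ G (G' x) x v) :
    ∫ x, F x * G' x = - ∫ x, F' x * G x :=
  integral_bilinear_hasLineDerivAt_right_eq_neg_left_of_integrable
    (B := ContinuousLinearMap.mul ℝ ℝ) h1 h2 h3 (fun x _ => hF x) (fun x _ => hG x)

lemma ibp_zero {F F' : Plane → ℝ} {v : Plane} (h1 : Integrable F) (h2 : Integrable F')
    (hF : ∀ x, HasLineDerivAt ℝ F (F' x) x v) : ∫ x, F' x = 0 := by
  have := ibp_mul (F := F) (F' := F') (G := fun _ => 1) (G' := fun _ => 0) (v := v)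
    (by simpa using h2) (by simp) (by simpa using h1) hF
    (fun x => by unfold HasLineDerivAt; exact hasDerivAt_const _ _)
  simpa using this

lemma evol {b bt : ℝ → Plane → ℝ} {b1 b2 : Bool → ℝ → Plane → ℝ} {t₀ : ℝ} {I : Set ℝ}
    (hI : I ∈ nhds t₀) (hb : UGB I b) (hbt : UGB I bt) (hb1 : ∀ i, UGB I (b1 i))
    (hb2 : ∀ i, UGB I (b2 i))
    (cb : ∀ t ∈ I, Continuous (b t)) (cbt : ∀ t ∈ I, Continuous (bt t))
    (cb1 : ∀ i, ∀ t ∈ I, Continuous (b1 i t)) (cb2 : ∀ i, ∀ t ∈ I, Continuous (b2 i t))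
    (dt : ∀ t ∈ I, ∀ x, HasDerivAt (fun s => b s x) (bt t x) t)
    (d2 : ∀ i, ∀ t ∈ I, ∀ x, HasLineDerivAt ℝ (b1 i t) (b2 i t x) x (dir i)) :
    HasDerivAt (fun t => ∫ x, b t x) (∫ x, (bt t₀ x - b2 false t₀ x - b2 true t₀ x)) t₀ := by
  have h0 : t₀ ∈ I := mem_of_mem_nhds hI
  obtain ⟨C, c, h1, h2, h3⟩ := id hbt
  have key := (hasDerivAt_integral_of_dominated_loc_of_deriv_le (μ := (volume : Measure Plane))
    (F := b) (F' := bt)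
    (bound := fun x => C * Real.exp (-c * nsq x)) hI ?_ ?_ ?_ ?_ ?_ ?_).2
  · have z : ∀ i, ∫ x, b2 i t₀ x = 0 := fun i =>
      ibp_zero ((hb1 i).integrable h0 (cb1 i t₀ h0)) ((hb2 i).integrable h0 (cb2 i t₀ h0)) (d2 i t₀ h0)
    have i0 := hbt.integrable h0 (cbt t₀ h0)
    have i1 := fun i => (hb2 i).integrable h0 (cb2 i t₀ h0)
    have e := integral_sub (i0.sub (i1 false)) (i1 true)
    have e' := integral_sub i0 (i1 false)
    simp only [Pi.sub_apply] at e
    rw [e, e', z, z]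
    simpa using key
  · filter_upwards [hI] with s hs
    exact (cb s hs).aestronglyMeasurable
  · exact hb.integrable h0 (cb t₀ h0)
  · exact (cbt t₀ h0).aestronglyMeasurable
  · exact Eventually.of_forall fun x s hs => h3 s hs x
  · exact (gauss_int h2).const_mul C
  · exact Eventually.of_forall fun x s hs => dt s hs x

/-! bounds of convolutions -/

lemma supp_bd {f : Plane → ℝ} (hc : HasCompactSupport f) :
    ∃ R : ℝ, 0 ≤ R ∧ ∀ y, f y ≠ 0 → nsq y ≤ R := by
  obtain ⟨M, hM⟩ := hc.bddAbove_image (f := nsq) continuous_nsq.continuousOn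
  refine ⟨max M 0, le_max_right _ _, fun y hy => le_max_of_le_left (hM ⟨y, subset_tsupport _ hy, rfl⟩)⟩

lemma nsq_sub_le (x y : Plane) : nsq (x - y) ≤ 2 * nsq x + 2 * nsq y := by
  simp only [nsq, Prod.fst_sub, Prod.snd_sub]
  nlinarith [sq_nonneg (x.1 + y.1), sq_nonneg (x.2 + y.2)]

lemma nsq_le_sub (x y : Plane) : nsq x ≤ 2 * nsq (x - y) + 2 * nsq y := by
  simp only [nsq, Prod.fst_sub, Prod.snd_sub]
  nlinarith [sq_nonneg (x.1 - 2 * y.1), sq_nonneg (x.2 - 2 * y.2)]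

lemma cv_int {f k : Plane → ℝ} (hf : Continuous f) (hc : HasCompactSupport f)
    (hk : Continuous k) (x : Plane) : Integrable (fun y => f y * k (x - y)) :=
  (hf.mul (by fun_prop)).integrable_of_hasCompactSupport hc.mul_right

lemma cv_abs_le {f k : Plane → ℝ} (x : Plane) :
    |cv f k x| ≤ ∫ y, |f y| * |k (x - y)| := by
  unfold cv
  refine (abs_integral_le_integral_abs).trans (le_of_eq ?_)
  simp only [abs_mul]

lemma habs {f : Plane → ℝ} (hc : HasCompactSupport f) : HasCompactSupport (fun y => |f y|) :=
  hc.comp_left (g := fun r : ℝ => |r|) abs_zero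

lemma cv_K_nonneg {f : Plane → ℝ} (h0 : ∀ y, 0 ≤ f y) {t : ℝ} (ht : 0 < t) (x : Plane) :
    0 ≤ cv f (KK t) x :=
  integral_nonneg fun y => mul_nonneg (h0 y) (KK_pos ht _).le

lemma cv_abs_K {f : Plane → ℝ} {t : ℝ} (ht : 0 < t) (x : Plane) :
    |cv f (KK t) x| ≤ cv (fun y => |f y|) (KK t) x := by
  refine (cv_abs_le x).trans (le_of_eq ?_)
  simp only [cv, abs_of_pos (KK_pos ht _)]

lemma cv_gauss {f : Plane → ℝ} (hf : Continuous f) (hc : HasCompactSupport f) {lo hi : ℝ}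
    (hlo : 0 < lo) : UGB (Icc lo hi) (fun t x => cv (fun y => |f y|) (KK t) x) := by
  obtain ⟨R, hR, hs⟩ := supp_bd hc
  by_cases hh : lo ≤ hi
  swap
  · exact ⟨0, 1, le_rfl, one_pos, fun t ht => absurd (ht.1.trans ht.2) hh⟩
  have hhi : 0 < hi := hlo.trans_le hh
  set D := (4 * π * lo)⁻¹ * Real.exp (R / (2 * lo)) with hD
  refine ⟨(∫ y, |f y|) * D, 1 / (8 * hi), mul_nonneg (integral_nonneg fun y => abs_nonneg _)
    (by positivity), by positivity, fun t ht x => ?_⟩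
  have t0 : 0 < t := hlo.trans_le ht.1
  rw [abs_of_nonneg (cv_K_nonneg (fun y => abs_nonneg _) t0 x)]
  unfold cv
  rw [mul_assoc, ← integral_mul_const]
  apply integral_mono (cv_int (f := fun y => |f y|) (by fun_prop) (habs hc) (KK_cont t) x)
    ((Continuous.integrable_of_hasCompactSupport (f := fun y => |f y|) (by fun_prop) (habs hc)).mul_const _)
  intro y
  by_cases hy : f y = 0
  · simp [hy]
  apply mul_le_mul_of_nonneg_left _ (abs_nonneg _)
  have hyR := hs y hy
  have hn := nsq_le_sub x y
  unfold KK
  rw [hD, mul_assoc (4 * π * lo)⁻¹, ← Real.exp_add]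
  apply mul_le_mul _ _ (Real.exp_pos _).le (by positivity)
  · apply inv_anti₀ (by positivity)
    gcongr; exact ht.1
  · apply Real.exp_le_exp.2
    have e1 : -(nsq (x - y)) / (4 * t) ≤ (R - nsq x / 2) / (4 * t) := by
      gcongr; linarith
    have e2 : (R - nsq x / 2) / (4 * t) = R / (4 * t) - nsq x / (8 * t) := by
      field_simp; ring
    have e3 : R / (4 * t) ≤ R / (2 * lo) := by
      apply div_le_div_of_nonneg_left hR (by positivity); linarith [ht.1]
    have e4 : nsq x / (8 * hi) ≤ nsq x / (8 * t) := by
      have := nsq_nonneg x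
      gcongr; exact ht.2
    have e5 : -(1 / (8 * hi)) * nsq x = - (nsq x / (8 * hi)) := by ring
    linarith

lemma cv_poly {f : Plane → ℝ} (hf : Continuous f) (hc : HasCompactSupport f) {lo : ℝ}
    (hlo : 0 < lo) : ∃ A : ℝ, 0 ≤ A ∧ ∀ t, lo ≤ t → ∀ i x,
      |cv f (Kd i t) x| ≤ A * (1 + nsq x) * cv (fun y => |f y|) (KK t) x ∧
      |cv f (Kdd i t) x| ≤ A * (1 + nsq x) * cv (fun y => |f y|) (KK t) x := by
  obtain ⟨R, hR, hs⟩ := supp_bd hc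
  set A0 := 1 / (4 * lo^2) + 1 / (2 * lo) with hA0
  refine ⟨A0 * (2 + 2 * R), by positivity, fun t ht i x => ?_⟩
  have t0 : 0 < t := hlo.trans_le ht
  have gen : ∀ k : Plane → ℝ, Continuous k → (∀ z, |k z| ≤ A0 * (1 + nsq z) * KK t z) →
      |cv f k x| ≤ A0 * (2 + 2 * R) * (1 + nsq x) * cv (fun y => |f y|) (KK t) x := by
    intro k hk hkb
    refine (cv_abs_le x).trans ?_
    unfold cv
    rw [← integral_const_mul]
    apply integral_mono (cv_int (f := fun y => |f y|) (k := fun z => |k z|) (by fun_prop) (habs hc) (by fun_prop) x)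
      ((cv_int (f := fun y => |f y|) (by fun_prop) (habs hc) (KK_cont t) x).const_mul _)
    intro y
    by_cases hy : f y = 0
    · simp [hy]
    have hyR := hs y hy
    have hn := nsq_sub_le x y
    have hn0 := nsq_nonneg x
    have hA : 0 ≤ A0 := by positivity
    have hK := (KK_pos t0 (x - y)).le
    calc |f y| * |k (x - y)| ≤ |f y| * (A0 * (1 + nsq (x - y)) * KK t (x - y)) :=
          mul_le_mul_of_nonneg_left (hkb _) (abs_nonneg _)
      _ ≤ |f y| * (A0 * ((2 + 2 * R) * (1 + nsq x)) * KK t (x - y)) := by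
          gcongr
          nlinarith
      _ = _ := by ring
  have hco : ∀ z, (co i z)^2 ≤ nsq z := by
    intro z; cases i <;> simp [co, nsq] <;> positivity
  constructor
  · apply gen _ (Kd_cont i t)
    intro z
    unfold Kd
    rw [abs_mul, abs_of_pos (KK_pos t0 z)]
    apply mul_le_mul_of_nonneg_right _ (KK_pos t0 z).le
    rw [abs_div, abs_neg, abs_of_pos (by positivity : 0 < 2 * t)]
    have e1 : |co i z| ≤ 1 + nsq z := by nlinarith [hco z, sq_abs (co i z), sq_nonneg (|co i z| - 1)]
    have hn0 := nsq_nonneg z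
    calc |co i z| / (2 * t) ≤ (1 + nsq z) / (2 * lo) := by gcongr
      _ = 1 / (2 * lo) * (1 + nsq z) := by ring
      _ ≤ _ := by
        apply mul_le_mul_of_nonneg_right _ (by positivity)
        rw [hA0]; simp; positivity
  · apply gen _ (Kdd_cont i t)
    intro z
    unfold Kdd
    rw [abs_mul, abs_of_pos (KK_pos t0 z)]
    apply mul_le_mul_of_nonneg_right _ (KK_pos t0 z).le
    have hn0 := nsq_nonneg z
    refine (abs_sub _ _).trans ?_
    rw [abs_of_nonneg (by positivity : 0 ≤ (co i z)^2 / (4 * t^2)), abs_of_pos (by positivity : 0 < 1 / (2*t))]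
    calc (co i z)^2 / (4 * t^2) + 1 / (2*t) ≤ nsq z / (4 * lo^2) + 1 / (2 * lo) := by
          gcongr; exact hco z
      _ ≤ _ := by
        rw [hA0]
        have : 0 ≤ 1 / (4 * lo^2) := by positivity
        have : 0 ≤ 1 / (2 * lo) * nsq z := by positivity
        have : nsq z / (4 * lo^2) = 1 / (4 * lo^2) * nsq z := by ring
        nlinarith

lemma UGB_of_poly {I : Set ℝ} {F G : ℝ → Plane → ℝ} (hG : UGB I G) {A : ℝ} (hA : 0 ≤ A)
    (h : ∀ t ∈ I, ∀ x, |F t x| ≤ A * (1 + nsq x) ^ 2 * |G t x|) : UGB I F := by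
  refine ((hG.poly).const_mul A).mono fun t ht x => ?_
  refine (h t ht x).trans (le_of_eq ?_)
  have := nsq_nonneg x
  rw [abs_mul, abs_mul, abs_of_nonneg hA, abs_of_nonneg (by positivity : (0:ℝ) ≤ (1 + nsq x)^2)]
  ring

lemma cv_UGB {f : Plane → ℝ} (hf : Continuous f) (hc : HasCompactSupport f) {lo hi : ℝ}
    (hlo : 0 < lo) : UGB (Icc lo hi) (fun t x => cv f (KK t) x) ∧
    ∀ i, UGB (Icc lo hi) (fun t x => cv f (Kd i t) x) ∧ UGB (Icc lo hi) (fun t x => cv f (Kdd i t) x) := by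
  have hg := cv_gauss hf hc (hi := hi) hlo
  obtain ⟨A, hA, h⟩ := cv_poly hf hc hlo
  have pos : ∀ t ∈ Icc lo hi, ∀ x, 0 ≤ cv (fun y => |f y|) (KK t) x := fun t ht x =>
    cv_K_nonneg (fun y => abs_nonneg _) (hlo.trans_le ht.1) x
  have aux : ∀ t ∈ Icc lo hi, ∀ x, A * (1 + nsq x) * cv (fun y => |f y|) (KK t) x ≤
      A * (1 + nsq x)^2 * |cv (fun y => |f y|) (KK t) x| := by
    intro t ht x
    rw [abs_of_nonneg (pos t ht x)]
    apply mul_le_mul_of_nonneg_right _ (pos t ht x)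
    apply mul_le_mul_of_nonneg_left _ hA
    nlinarith [nsq_nonneg x]
  refine ⟨hg.mono fun t ht x => ?_, fun i => ⟨UGB_of_poly hg hA fun t ht x => ?_, UGB_of_poly hg hA fun t ht x => ?_⟩⟩
  · rw [abs_of_nonneg (pos t ht x)]
    exact cv_abs_K (hlo.trans_le ht.1) x
  · exact ((h t ht.1 i x).1).trans (aux t ht x)
  · exact ((h t ht.1 i x).2).trans (aux t ht x)

def bS (p u v : ℝ) : ℝ := u ^ p + v ^ (p / (p - 1))
def bT (p u v : ℝ) : ℝ := (bS p u v) ^ ((p - 2) / p)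
def bY (p v : ℝ) : ℝ := v ^ (p / (p - 1))
def bB (p : ℝ) : ℝ := 5 * p - 4
def Ph (p u v : ℝ) : ℝ := u ^ 2 * bT p u v + bB p * bY p v
def Pu (p u v : ℝ) : ℝ := 2 * u * bT p u v + (p - 2) * u * u ^ p * bT p u v / bS p u v
def Pv (p u v : ℝ) : ℝ :=
  ((2 - p / (p - 1)) * u ^ 2 * bT p u v / bS p u v + bB p * (p / (p - 1))) * bY p v / v
def Puu (p u v : ℝ) : ℝ :=
  2 * bT p u v + (p - 2) * (p + 3) * u ^ p * bT p u v / bS p u v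
    - 2 * (p - 2) * (u ^ p) ^ 2 * bT p u v / (bS p u v) ^ 2
def Puv (p u v : ℝ) : ℝ :=
  2 * (2 - p / (p - 1)) * u * (bY p v) ^ 2 * bT p u v / (v * (bS p u v) ^ 2)
def Pvv (p u v : ℝ) : ℝ :=
  ((2 - p / (p - 1)) * (p / (p - 1) - 1) * u ^ 2 * bT p u v / bS p u v
    - 2 * (2 - p / (p - 1)) * (p / (p - 1) - 1) * u ^ 2 * bY p v * bT p u v / (bS p u v) ^ 2
    + bB p * (p / (p - 1)) * (p / (p - 1) - 1)) * bY p v / v ^ 2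

section
variable {p : ℝ}

lemma bY_pos {v : ℝ} (hv : 0 < v) : 0 < bY p v := by unfold bY; positivity
lemma bS_pos {u v : ℝ} (hu : 0 < u) (hv : 0 < v) : 0 < bS p u v := by unfold bS; positivity
lemma bT_pos {u v : ℝ} (hu : 0 < u) (hv : 0 < v) : 0 < bT p u v := by
  have := bS_pos (p := p) hu hv
  unfold bT; positivity

lemma rpow_d {w : ℝ → ℝ} {a s r : ℝ} (hw : HasDerivAt w a s) (h0 : 0 < w s) :
    HasDerivAt (fun s => (w s) ^ r) (r * (w s) ^ r / w s * a) s := by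
  have := hw.rpow_const (p := r) (Or.inl h0.ne')
  convert! this using 1
  rw [Real.rpow_sub_one h0.ne']
  ring

lemma bS_d {w v : ℝ → ℝ} {a b s : ℝ} (hw : HasDerivAt w a s) (hv : HasDerivAt v b s)
    (w0 : 0 < w s) (v0 : 0 < v s) :
    HasDerivAt (fun s => bS p (w s) (v s))
      (p * (w s) ^ p / w s * a + p / (p - 1) * bY p (v s) / v s * b) s :=
  (rpow_d hw w0).add (rpow_d hv v0)

lemma bT_d {w v : ℝ → ℝ} {a b s : ℝ} (hw : HasDerivAt w a s) (hv : HasDerivAt v b s)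
    (w0 : 0 < w s) (v0 : 0 < v s) :
    HasDerivAt (fun s => bT p (w s) (v s))
      ((p - 2) / p * bT p (w s) (v s) / bS p (w s) (v s) *
        (p * (w s) ^ p / w s * a + p / (p - 1) * bY p (v s) / v s * b)) s :=
  rpow_d (bS_d hw hv w0 v0) (bS_pos w0 v0)

lemma bY_d {v : ℝ → ℝ} {b s : ℝ} (hv : HasDerivAt v b s) (v0 : 0 < v s) :
    HasDerivAt (fun s => bY p (v s)) (p / (p - 1) * bY p (v s) / v s * b) s := rpow_d hv v0

lemma Ph_d (hp : 2 ≤ p) {w v : ℝ → ℝ} {a b s : ℝ} (hw : HasDerivAt w a s)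
    (hv : HasDerivAt v b s) (w0 : 0 < w s) (v0 : 0 < v s) :
    HasDerivAt (fun s => Ph p (w s) (v s)) (Pu p (w s) (v s) * a + Pv p (w s) (v s) * b) s := by
  have h := ((hw.pow 2).mul (bT_d (p := p) hw hv w0 v0)).add ((bY_d (p := p) hv v0).const_mul (bB p))
  unfold Ph
  convert! h using 1
  have hS := bS_pos (p := p) w0 v0
  have p1 : 0 < p - 1 := by linarith
  have p0 : 0 < p := by linarith
  unfold Pu Pv
  simp only [Pi.pow_apply]
  generalize bS p (w s) (v s) = S at *
  generalize bT p (w s) (v s) = T at *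
  generalize bY p (v s) = Y at *
  generalize (w s) ^ p = X at *
  generalize w s = x at *
  generalize v s = y at *
  field_simp
  ring

lemma Pu_d (hp : 2 ≤ p) {w v : ℝ → ℝ} {a b s : ℝ} (hw : HasDerivAt w a s)
    (hv : HasDerivAt v b s) (w0 : 0 < w s) (v0 : 0 < v s) :
    HasDerivAt (fun s => Pu p (w s) (v s)) (Puu p (w s) (v s) * a + Puv p (w s) (v s) * b) s := by
  have hS := bS_pos (p := p) w0 v0
  have dT := bT_d (p := p) hw hv w0 v0
  have dS := bS_d (p := p) hw hv w0 v0
  have h := ((hw.const_mul 2).mul dT).add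
    ((((hw.const_mul (p-2)).mul (rpow_d (r := p) hw w0)).mul dT).div dS hS.ne')
  unfold Pu
  convert! h using 1
  have p1 : 0 < p - 1 := by linarith
  have p0 : 0 < p := by linarith
  unfold Puu Puv
  simp only [Pi.mul_apply]
  have hSe : (w s)^p = bS p (w s) (v s) - bY p (v s) := by unfold bS bY; ring
  rw [hSe]
  generalize bS p (w s) (v s) = S at *
  generalize bT p (w s) (v s) = T at *
  generalize bY p (v s) = Y at *
  generalize w s = x at *
  generalize v s = y at *
  field_simp
  ring

lemma Pv_d (hp : 2 ≤ p) {w v : ℝ → ℝ} {a b s : ℝ} (hw : HasDerivAt w a s)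
    (hv : HasDerivAt v b s) (w0 : 0 < w s) (v0 : 0 < v s) :
    HasDerivAt (fun s => Pv p (w s) (v s)) (Puv p (w s) (v s) * a + Pvv p (w s) (v s) * b) s := by
  have hS := bS_pos (p := p) w0 v0
  have dT := bT_d (p := p) hw hv w0 v0
  have dS := bS_d (p := p) hw hv w0 v0
  have dY := bY_d (p := p) hv v0
  have h := ((((((hw.pow 2).const_mul (2 - p / (p - 1))).mul dT).div dS hS.ne').add_const
    (bB p * (p / (p - 1)))).mul dY).div hv v0.ne'
  unfold Pv
  convert! h using 1
  have p1 : 0 < p - 1 := by linarith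
  have p0 : 0 < p := by linarith
  unfold Puv Pvv
  simp only [Pi.mul_apply, Pi.div_apply, Pi.pow_apply]
  have hSe : (w s)^p = bS p (w s) (v s) - bY p (v s) := by unfold bS bY; ring
  rw [hSe]
  generalize bS p (w s) (v s) = S at *
  generalize bT p (w s) (v s) = T at *
  generalize bY p (v s) = Y at *
  generalize w s = x at *
  generalize v s = y at *
  field_simp
  ring

lemma bYS {u v : ℝ} (hu : 0 < u) : bY p v < bS p u v := by
  unfold bY bS; have : 0 < u ^ p := by positivity
  linarith

lemma u2T (hp : 2 ≤ p) {u v : ℝ} (hu : 0 < u) (hv : 0 < v) :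
    u ^ 2 * bT p u v ≤ bS p u v := by
  have hS := bS_pos (p := p) hu hv
  have hS' : u ^ p ≤ bS p u v := by
    unfold bS; have : 0 < v ^ (p / (p-1)) := by positivity
    linarith
  have p0 : 0 < p := by linarith
  have h1 : u ^ 2 ≤ (bS p u v) ^ (2 / p) := by
    calc u ^ 2 = (u ^ p) ^ (2 / p) := by
          rw [← Real.rpow_mul hu.le, ← Real.rpow_natCast]; congr 1; field_simp; norm_num
      _ ≤ _ := Real.rpow_le_rpow (by positivity) hS' (by positivity)
  calc u ^ 2 * bT p u v ≤ (bS p u v) ^ (2 / p) * (bS p u v) ^ ((p - 2) / p) :=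
        mul_le_mul_of_nonneg_right h1 (bT_pos hu hv).le
    _ = (bS p u v) ^ (1 : ℝ) := by rw [← Real.rpow_add hS]; congr 1; field_simp; ring
    _ = _ := Real.rpow_one _

lemma TY (hp : 2 ≤ p) {u v : ℝ} (hu : 0 < u) (hv : 0 < v) :
    1 ≤ bT p u v * (bY p v / v ^ 2) := by
  have p0 : 0 < p := by linarith
  have p1 : 0 < p - 1 := by linarith
  have hY := bY_pos (p := p) hv
  have h1 : (bY p v) ^ ((p - 2) / p) ≤ bT p u v :=
    Real.rpow_le_rpow hY.le (bYS hu).le (div_nonneg (by linarith) p0.le)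
  have h2 : (bY p v) ^ ((p - 2) / p) * (bY p v / v ^ 2) = 1 := by
    unfold bY
    rw [← Real.rpow_natCast v 2, ← Real.rpow_sub hv, ← Real.rpow_mul hv.le, ← Real.rpow_add hv]
    convert Real.rpow_zero v using 2
    push_cast
    field_simp
    ring
  calc 1 = _ := h2.symm
    _ ≤ _ := mul_le_mul_of_nonneg_right h1 (by positivity)

set_option maxHeartbeats 1000000 in
lemma Phess (hp : 2 ≤ p) {u v : ℝ} (hu : 0 < u) (hv : 0 < v) (a b : ℝ) :
    bT p u v * a ^ 2 + bY p v / v ^ 2 * b ^ 2 ≤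
      Puu p u v * a ^ 2 + 2 * Puv p u v * a * b + Pvv p u v * b ^ 2 := by
  have hS := bS_pos (p := p) hu hv
  have hT := bT_pos (p := p) hu hv
  have hY := bY_pos (p := p) hv
  have h1 := u2T hp hu hv
  have hYS := bYS (p := p) (v := v) hu
  have p1 : 0 < p - 1 := by linarith
  have hX : u ^ p = bS p u v - bY p v := by unfold bS bY; ring
  obtain ⟨q1, hq1⟩ : ∃ q1, q1 = p / (p - 1) - 1 := ⟨_, rfl⟩
  have q1p : 0 < q1 := by
    rw [hq1]; have : p / (p-1) - 1 = 1 / (p-1) := by field_simp; ring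
    rw [this]; positivity
  have q1l : q1 ≤ 1 := by
    rw [hq1]; have : p / (p-1) - 1 = 1 / (p-1) := by field_simp; ring
    rw [this, div_le_one p1]; linarith
  have hqB : q1 * (p - 1) = 1 := by rw [hq1]; field_simp; ring
  have hq : p / (p - 1) = 1 + q1 := by rw [hq1]; ring
  unfold Puu Puv Pvv bB
  rw [hq, hX]
  generalize bS p u v = S at *
  generalize bT p u v = T at *
  generalize bY p v = Y at *
  obtain ⟨τ, hτ⟩ : ∃ τ, τ = u ^ 2 * T / S := ⟨_, rfl⟩
  obtain ⟨y, hy⟩ : ∃ y, y = Y / S := ⟨_, rfl⟩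
  obtain ⟨Z, hZ⟩ : ∃ Z, Z = Y / v ^ 2 := ⟨_, rfl⟩
  have τ0 : 0 < τ := by rw [hτ]; positivity
  have τ1 : τ ≤ 1 := by rw [hτ, div_le_one hS]; exact h1
  have y0 : 0 < y := by rw [hy]; positivity
  have y1 : y ≤ 1 := by rw [hy, div_le_one hS]; exact hYS.le
  have Z0 : 0 < Z := by rw [hZ]; positivity
  have E1 : 2 * T + (p - 2) * (p + 3) * (S - Y) * T / S - 2 * (p - 2) * (S - Y) ^ 2 * T / S ^ 2
      = 2 * T + (p - 2) * T * (1 - y) * ((p + 3) - 2 * (1 - y)) := by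
    rw [hy]; field_simp; ring
  have B1 : 2 * T ≤ 2 * T + (p - 2) * T * (1 - y) * ((p + 3) - 2 * (1 - y)) := by
    have : 0 ≤ (p - 2) * T * (1 - y) * ((p + 3) - 2 * (1 - y)) := by
      apply mul_nonneg (mul_nonneg (mul_nonneg _ hT.le) _) <;> linarith
    linarith
  have E3 : ((2 - (1 + q1)) * (1 + q1 - 1) * u ^ 2 * T / S
      - 2 * (2 - (1 + q1)) * (1 + q1 - 1) * u ^ 2 * Y * T / S ^ 2
      + (5 * p - 4) * (1 + q1) * (1 + q1 - 1)) * Y / v ^ 2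
      = ((1 - q1) * q1 * τ * (1 - 2 * y) + (5 * p - 4) * (1 + q1) * q1) * Z := by
    rw [hτ, hy, hZ]; field_simp; ring
  have B3 : 5 * Z ≤ ((1 - q1) * q1 * τ * (1 - 2 * y) + (5 * p - 4) * (1 + q1) * q1) * Z := by
    apply mul_le_mul_of_nonneg_right _ Z0.le
    have e1 : (5 * p - 4) * (1 + q1) * q1 = (5 + q1) * (1 + q1) := by
      have : (5 * p - 4) * (1 + q1) * q1 = (5 * (q1 * (p - 1)) + q1) * (1 + q1) := by ring
      rw [this, hqB]; ring
    have e2 : -q1 ≤ (1 - q1) * q1 * τ * (1 - 2 * y) := by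
      have e3 : 0 ≤ (1 - q1) * q1 * τ := by
        apply mul_nonneg (mul_nonneg _ q1p.le) τ0.le; linarith
      have e4 : (1 - q1) * q1 * τ ≤ q1 := by
        have : (1 - q1) * τ ≤ 1 := by nlinarith
        nlinarith
      nlinarith
    rw [e1]; nlinarith
  have E2 : (2 * (2 - (1 + q1)) * u * Y ^ 2 * T / (v * S ^ 2)) ^ 2
      = 4 * (1 - q1) ^ 2 * τ * y ^ 3 * (T * Z) := by
    rw [hτ, hy, hZ]; field_simp; ring
  have B2 : (2 * (2 - (1 + q1)) * u * Y ^ 2 * T / (v * S ^ 2)) ^ 2 ≤ 4 * (T * Z) := by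
    rw [E2]
    apply mul_le_mul_of_nonneg_right _ (by positivity)
    have f1 : (1 - q1) ^ 2 ≤ 1 := pow_le_one₀ (by linarith) (by linarith)
    have f2 : y ^ 3 ≤ 1 := pow_le_one₀ y0.le y1
    have f3 : (1 - q1) ^ 2 * τ ≤ 1 := mul_le_one₀ f1 τ0.le τ1
    have f4 : 0 ≤ (1 - q1) ^ 2 * τ := by positivity
    have : (1 - q1) ^ 2 * τ * y ^ 3 ≤ 1 := mul_le_one₀ f3 (by positivity) f2
    linarith
  rw [E1, E3, ← hZ]
  generalize 2 * (2 - (1 + q1)) * u * Y ^ 2 * T / (v * S ^ 2) = m at *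
  generalize 2 * T + (p - 2) * T * (1 - y) * ((p + 3) - 2 * (1 - y)) = A at *
  generalize ((1 - q1) * q1 * τ * (1 - 2 * y) + (5 * p - 4) * (1 + q1) * q1) * Z = D at *
  have g1 : 2 * T * a ^ 2 ≤ A * a ^ 2 := mul_le_mul_of_nonneg_right B1 (sq_nonneg _)
  have g3 : 5 * Z * b ^ 2 ≤ D * b ^ 2 := mul_le_mul_of_nonneg_right B3 (sq_nonneg _)
  have g2 : 0 ≤ T * a ^ 2 + 2 * m * a * b + 4 * Z * b ^ 2 := by
    have : 0 ≤ T * (T * a ^ 2 + 2 * m * a * b + 4 * Z * b ^ 2) := by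
      have : m ^ 2 * b ^ 2 ≤ 4 * (T * Z) * b ^ 2 := mul_le_mul_of_nonneg_right B2 (sq_nonneg _)
      nlinarith [sq_nonneg (T * a + m * b)]
    exact nonneg_of_mul_nonneg_right this hT
  linarith

lemma Ph_nonneg (hp : 2 ≤ p) {u v : ℝ} (hu : 0 < u) (hv : 0 < v) : 0 ≤ Ph p u v := by
  have hT := bT_pos (p := p) hu hv
  have hY := bY_pos (p := p) hv
  have : 0 ≤ bB p := by unfold bB; linarith
  unfold Ph; positivity

lemma Ph_le (hp : 2 ≤ p) {u v : ℝ} (hu : 0 < u) (hv : 0 < v) :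
    Ph p u v ≤ u ^ p + (5 * p) * v ^ (p / (p - 1)) := by
  have h1 := u2T hp hu hv
  have hY := bY_pos (p := p) hv
  unfold Ph bB
  unfold bS at h1
  unfold bY at *
  linarith

set_option maxHeartbeats 1000000 in
lemma P_bds (hp : 2 ≤ p) : ∃ M : ℝ, 0 ≤ M ∧ ∀ u v : ℝ, 0 < u → 0 < v →
    |Ph p u v| ≤ M * bS p u v ∧ |Pu p u v| * u ≤ M * bS p u v ∧ |Pv p u v| * v ≤ M * bS p u v ∧
    |Puu p u v| * (u * u) ≤ M * bS p u v ∧ |Puv p u v| * (u * v) ≤ M * bS p u v ∧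
    |Pvv p u v| * (v * v) ≤ M * bS p u v := by
  refine ⟨5 * p ^ 2 + 20 * p + 20, by positivity, fun u v hu hv => ?_⟩
  have hS := bS_pos (p := p) hu hv
  have hT := bT_pos (p := p) hu hv
  have hY := bY_pos (p := p) hv
  have h1 := u2T hp hu hv
  have hYS := bYS (p := p) (v := v) hu
  have p1 : 0 < p - 1 := by linarith
  have hX : u ^ p = bS p u v - bY p v := by unfold bS bY; ring
  obtain ⟨q1, hq1⟩ : ∃ q1, q1 = p / (p - 1) - 1 := ⟨_, rfl⟩
  have q1p : 0 < q1 := by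
    rw [hq1]; have : p / (p-1) - 1 = 1 / (p-1) := by field_simp; ring
    rw [this]; positivity
  have q1l : q1 ≤ 1 := by
    rw [hq1]; have : p / (p-1) - 1 = 1 / (p-1) := by field_simp; ring
    rw [this, div_le_one p1]; linarith
  have hq : p / (p - 1) = 1 + q1 := by rw [hq1]; ring
  unfold Ph Pu Pv Puu Puv Pvv bB
  rw [hq, hX]
  generalize bS p u v = S at *
  generalize bT p u v = T at *
  generalize bY p v = Y at *
  obtain ⟨τ, hτ⟩ : ∃ τ, τ = u ^ 2 * T / S := ⟨_, rfl⟩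
  obtain ⟨y, hy⟩ : ∃ y, y = Y / S := ⟨_, rfl⟩
  have τ0 : 0 < τ := by rw [hτ]; positivity
  have τ1 : τ ≤ 1 := by rw [hτ, div_le_one hS]; exact h1
  have y0 : 0 < y := by rw [hy]; positivity
  have y1 : y ≤ 1 := by rw [hy, div_le_one hS]; exact hYS.le
  have red : ∀ z g c : ℝ, 0 < g → z * g = c * S → |c| ≤ 5 * p ^ 2 + 20 * p + 20 →
      |z| * g ≤ (5 * p ^ 2 + 20 * p + 20) * S := by
    intro z g c hg h hc
    rw [← abs_of_pos hg, ← abs_mul, h, abs_mul, abs_of_pos hS]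
    exact mul_le_mul_of_nonneg_right hc hS.le
  have ty0 : 0 < τ * y := by positivity
  have ty1 : τ * y ≤ 1 := mul_le_one₀ τ1 y0.le y1
  have qq : 0 ≤ (1 - q1) := by linarith
  refine ⟨?_, ?_, ?_, ?_, ?_, ?_⟩
  · have := red (u ^ 2 * T + (5 * p - 4) * Y) 1 (τ + (5 * p - 4) * y) one_pos
      (by rw [hτ, hy]; field_simp) ?_
    · simpa using this
    · rw [abs_le]; constructor <;> nlinarith
  · apply red _ _ (2 * τ + (p - 2) * τ * (1 - y)) hu
    · rw [hτ, hy]; field_simp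
    · have a1 : 0 ≤ τ * (1 - y) := mul_nonneg τ0.le (by linarith)
      have a2 : τ * (1 - y) ≤ 1 := mul_le_one₀ τ1 (by linarith) (by linarith)
      rw [abs_le]; constructor <;> nlinarith
  · apply red _ _ (((1 - q1) * τ + (5 * p - 4) * (1 + q1)) * y) hv
    · rw [hτ, hy]; field_simp; ring
    · have a1 : 0 ≤ (1 - q1) * τ := by positivity
      have a2 : (1 - q1) * τ ≤ 1 := mul_le_one₀ (by linarith) τ0.le τ1
      have a3 : 0 ≤ (5 * p - 4) * (1 + q1) := by apply mul_nonneg <;> linarith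
      have a4 : (5 * p - 4) * (1 + q1) ≤ 10 * p := by nlinarith
      rw [abs_le]; constructor <;> nlinarith
  · apply red _ _ (2 * τ + (p - 2) * (p + 3) * (τ * (1 - y)) - 2 * (p - 2) * (τ * (1 - y) ^ 2)) (by positivity)
    · rw [hτ, hy]; field_simp
    · have a1 : 0 ≤ τ * (1 - y) := mul_nonneg τ0.le (by linarith)
      have a2 : τ * (1 - y) ≤ 1 := mul_le_one₀ τ1 (by linarith) (by linarith)
      have a3 : 0 ≤ τ * (1 - y) ^ 2 := by positivity
      have a4 : τ * (1 - y) ^ 2 ≤ 1 :=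
        mul_le_one₀ τ1 (by positivity) (pow_le_one₀ (by linarith) (by linarith))
      have a5 : 0 ≤ (p - 2) * (p + 3) := by apply mul_nonneg <;> linarith
      have a6 : (p - 2) * (p + 3) * (τ * (1 - y)) ≤ (p - 2) * (p + 3) := by nlinarith
      have a7 : 0 ≤ (p - 2) * (p + 3) * (τ * (1 - y)) := by positivity
      have a8 : (p - 2) * (τ * (1 - y) ^ 2) ≤ (p - 2) := by nlinarith
      have a9 : 0 ≤ (p - 2) * (τ * (1 - y) ^ 2) := mul_nonneg (by linarith) a3
      rw [abs_le]; constructor <;> nlinarith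
  · apply red _ _ (2 * ((1 - q1) * (τ * y ^ 2))) (by positivity)
    · rw [hτ, hy]; field_simp; ring
    · have a3 : 0 ≤ τ * y ^ 2 := by positivity
      have a4 : τ * y ^ 2 ≤ 1 := mul_le_one₀ τ1 (by positivity) (pow_le_one₀ y0.le y1)
      have a5 : (1 - q1) * (τ * y ^ 2) ≤ 1 := mul_le_one₀ (by linarith) a3 a4
      have a6 : 0 ≤ (1 - q1) * (τ * y ^ 2) := by positivity
      rw [abs_le]; constructor <;> nlinarith
  · apply red _ _ (((1 - q1) * q1) * (τ * y) - 2 * (((1 - q1) * q1) * (τ * y * y)) +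
      (5 * p - 4) * (1 + q1) * q1 * y) (by positivity)
    · rw [hτ, hy]; field_simp; ring
    · have b0 : 0 ≤ (1 - q1) * q1 := by positivity
      have b1 : (1 - q1) * q1 ≤ 1 := mul_le_one₀ (by linarith) q1p.le q1l
      have b2 : 0 ≤ τ * y * y := by positivity
      have b3 : τ * y * y ≤ 1 := mul_le_one₀ ty1 y0.le y1
      have b4 : 0 ≤ ((1 - q1) * q1) * (τ * y) := by positivity
      have b5 : ((1 - q1) * q1) * (τ * y) ≤ 1 := mul_le_one₀ b1 ty0.le ty1
      have b6 : 0 ≤ ((1 - q1) * q1) * (τ * y * y) := by positivity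
      have b7 : ((1 - q1) * q1) * (τ * y * y) ≤ 1 := mul_le_one₀ b1 b2 b3
      have c0 : 0 ≤ (1 + q1) * q1 * y := by positivity
      have c1 : (1 + q1) * q1 ≤ 2 := by nlinarith
      have c2 : (1 + q1) * q1 * y ≤ 2 := by nlinarith [mul_pos (by linarith : 0 < 1 + q1) q1p]
      have c3 : 0 ≤ (5 * p - 4) * ((1 + q1) * q1 * y) := mul_nonneg (by linarith) c0
      have c4 : (5 * p - 4) * ((1 + q1) * q1 * y) ≤ (5 * p - 4) * 2 := mul_le_mul_of_nonneg_left c2 (by linarith)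
      have c5 : (5 * p - 4) * (1 + q1) * q1 * y = (5 * p - 4) * ((1 + q1) * q1 * y) := by ring
      rw [c5, abs_le]; constructor <;> nlinarith

lemma P_cont {w v : Plane → ℝ} (cw : Continuous w) (cv : Continuous v) (w0 : ∀ x, 0 < w x)
    (v0 : ∀ x, 0 < v x) :
    Continuous (fun x => Ph p (w x) (v x)) ∧ Continuous (fun x => Pu p (w x) (v x)) ∧
    Continuous (fun x => Pv p (w x) (v x)) ∧ Continuous (fun x => Puu p (w x) (v x)) ∧
    Continuous (fun x => Puv p (w x) (v x)) ∧ Continuous (fun x => Pvv p (w x) (v x)) := by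
  have hX : Continuous (fun x => (w x) ^ p) := cw.rpow_const fun x => Or.inl (w0 x).ne'
  have hY : Continuous (fun x => bY p (v x)) := cv.rpow_const fun x => Or.inl (v0 x).ne'
  have hS : Continuous (fun x => bS p (w x) (v x)) := hX.add hY
  have hT : Continuous (fun x => bT p (w x) (v x)) :=
    hS.rpow_const fun x => Or.inl (bS_pos (w0 x) (v0 x)).ne'
  have nS : ∀ x, bS p (w x) (v x) ≠ 0 := fun x => (bS_pos (w0 x) (v0 x)).ne'
  have nS2 : ∀ x, bS p (w x) (v x) ^ 2 ≠ 0 := fun x => pow_ne_zero 2 (nS x)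
  have nv : ∀ x, v x ≠ 0 := fun x => (v0 x).ne'
  have nv2 : ∀ x, v x ^ 2 ≠ 0 := fun x => pow_ne_zero 2 (nv x)
  have nvS : ∀ x, v x * bS p (w x) (v x) ^ 2 ≠ 0 := fun x => mul_ne_zero (nv x) (nS2 x)
  unfold Ph Pu Pv Puu Puv Pvv
  refine ⟨?_, ?_, ?_, ?_, ?_, ?_⟩ <;> fun_prop (disch := assumption)
end

lemma cv_K_pos {f : Plane → ℝ} (hf : Continuous f) (hc : HasCompactSupport f)
    (h0 : ∀ y, 0 ≤ f y) {y₀ : Plane} (hy : f y₀ ≠ 0) {t : ℝ} (ht : 0 < t) (x : Plane) :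
    0 < cv f (KK t) x := by
  unfold cv
  apply Continuous.integral_pos_of_hasCompactSupport_nonneg_nonzero (x := y₀)
  · have := KK_cont t; fun_prop
  · exact hc.mul_right
  · intro y; exact mul_nonneg (h0 y) (KK_pos ht _).le
  · exact mul_ne_zero hy (KK_pos ht _).ne'

lemma tbd {P z g M S L : ℝ} (h : |P| * g ≤ M * S) (hz : |z| ≤ L * g) (hL : 0 ≤ L) :
    |P * z| ≤ L * (M * S) := by
  rw [abs_mul]
  calc |P| * |z| ≤ |P| * (L * g) := mul_le_mul_of_nonneg_left hz (abs_nonneg _)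
    _ = L * (|P| * g) := by ring
    _ ≤ _ := mul_le_mul_of_nonneg_left h hL

lemma lin_line {f : Plane → ℝ} (hf : Continuous f) (hc : HasCompactSupport f) (t : ℝ) (i : Bool)
    (x : Plane) : HasLineDerivAt ℝ (cv f (KK t)) (cv f (Kd i t) x) x (dir i) :=
  cv_line hf hc (KK_cont t) (Kd_cont i t) (KK_line i t) x

lemma lin_line2 {f : Plane → ℝ} (hf : Continuous f) (hc : HasCompactSupport f) (t : ℝ) (i : Bool)
    (x : Plane) : HasLineDerivAt ℝ (cv f (Kd i t)) (cv f (Kdd i t) x) x (dir i) :=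
  cv_line hf hc (Kd_cont i t) (Kdd_cont i t) (Kd_line i t) x

/-- the dissipation -/
def QQ (p : ℝ) (f g : Plane → ℝ) (t : ℝ) (x : Plane) (i : Bool) : ℝ :=
  Puu p (cv f (KK t) x) (cv g (KK t) x) * cv f (Kd i t) x ^ 2
  + 2 * Puv p (cv f (KK t) x) (cv g (KK t) x) * cv f (Kd i t) x * cv g (Kd i t) x
  + Pvv p (cv f (KK t) x) (cv g (KK t) x) * cv g (Kd i t) x ^ 2

set_option maxHeartbeats 1000000 in
lemma E_deriv {p : ℝ} (hp : 2 ≤ p) {f g : Plane → ℝ} (hf : Continuous f)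
    (hfc : HasCompactSupport f) (hf0 : ∀ y, 0 ≤ f y) {y₀ : Plane} (hy : f y₀ ≠ 0)
    (hg : Continuous g) (hgc : HasCompactSupport g) (hg0 : ∀ y, 0 ≤ g y) {z₀ : Plane}
    (hz : g z₀ ≠ 0) {t₀ : ℝ} (ht₀ : 0 < t₀) :
    Integrable (fun x => QQ p f g t₀ x false + QQ p f g t₀ x true) ∧
    HasDerivAt (fun t => ∫ x, Ph p (cv f (KK t) x) (cv g (KK t) x))
      (- ∫ x, (QQ p f g t₀ x false + QQ p f g t₀ x true)) t₀ := by
  have hlo : 0 < t₀ / 2 := by positivity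
  set I := Icc (t₀ / 2) (2 * t₀) with hIdef
  have hI : I ∈ nhds t₀ := Icc_mem_nhds (by linarith) (by linarith)
  have hI0 : t₀ ∈ I := mem_of_mem_nhds hI
  have tpos : ∀ t ∈ I, 0 < t := fun t ht => hlo.trans_le ht.1
  have wp : ∀ t ∈ I, ∀ x, 0 < cv f (KK t) x := fun t ht x => cv_K_pos hf hfc hf0 hy (tpos t ht) x
  have vp : ∀ t ∈ I, ∀ x, 0 < cv g (KK t) x := fun t ht x => cv_K_pos hg hgc hg0 hz (tpos t ht) x
  have fabs : (fun y => |f y|) = f := funext fun y => abs_of_nonneg (hf0 y)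
  have gabs : (fun y => |g y|) = g := funext fun y => abs_of_nonneg (hg0 y)
  obtain ⟨M, hM, hMb⟩ := P_bds hp
  obtain ⟨A₁, hA₁, hb₁⟩ := cv_poly hf hfc hlo
  obtain ⟨A₂, hA₂, hb₂⟩ := cv_poly hg hgc hlo
  rw [fabs] at hb₁
  rw [gabs] at hb₂
  set A := 1 + A₁ + A₂ with hA
  have hA1 : 1 ≤ A := by linarith
  have q0 : 0 < p / (p - 1) := div_pos (by linarith) (by linarith)
  have uS : UGB I (fun t x => bS p (cv f (KK t) x) (cv g (KK t) x)) := by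
    have e1 := (cv_gauss hf hfc (hi := 2 * t₀) hlo)
    have e2 := (cv_gauss hg hgc (hi := 2 * t₀) hlo)
    rw [fabs] at e1
    rw [gabs] at e2
    exact (e1.rpow (by linarith : 0 < p) fun t ht x => (wp t ht x).le).add
      (e2.rpow q0 fun t ht x => (vp t ht x).le)
  have L1 : ∀ x : Plane, 1 ≤ A * (1 + nsq x) := fun x => by nlinarith [nsq_nonneg x]
  have lw : ∀ t ∈ I, ∀ x i, |cv f (Kd i t) x| ≤ A * (1 + nsq x) * cv f (KK t) x := by
    intro t ht x i
    refine ((hb₁ t ht.1 i x).1).trans (mul_le_mul_of_nonneg_right ?_ (wp t ht x).le)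
    nlinarith [nsq_nonneg x]
  have lww : ∀ t ∈ I, ∀ x i, |cv f (Kdd i t) x| ≤ A * (1 + nsq x) * cv f (KK t) x := by
    intro t ht x i
    refine ((hb₁ t ht.1 i x).2).trans (mul_le_mul_of_nonneg_right ?_ (wp t ht x).le)
    nlinarith [nsq_nonneg x]
  have lv : ∀ t ∈ I, ∀ x i, |cv g (Kd i t) x| ≤ A * (1 + nsq x) * cv g (KK t) x := by
    intro t ht x i
    refine ((hb₂ t ht.1 i x).1).trans (mul_le_mul_of_nonneg_right ?_ (vp t ht x).le)
    nlinarith [nsq_nonneg x]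
  have lvv : ∀ t ∈ I, ∀ x i, |cv g (Kdd i t) x| ≤ A * (1 + nsq x) * cv g (KK t) x := by
    intro t ht x i
    refine ((hb₂ t ht.1 i x).2).trans (mul_le_mul_of_nonneg_right ?_ (vp t ht x).le)
    nlinarith [nsq_nonneg x]
  have mul2 : ∀ {a b c d L : ℝ}, 0 ≤ L → |a| ≤ L * c → |b| ≤ L * d → |a * b| ≤ L * L * (c * d) := by
    intro a b c d L hL h1 h2
    rw [abs_mul]
    calc |a| * |b| ≤ (L * c) * (L * d) := mul_le_mul h1 h2 (abs_nonneg _) ((abs_nonneg _).trans h1)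
      _ = _ := by ring
  -- the generic UGB statement for products
  have gen : ∀ (P : ℝ → ℝ → ℝ) (gf : ℝ → ℝ → ℝ) (z : ℝ → Plane → ℝ),
      (∀ u v, 0 < u → 0 < v → |P u v| * gf u v ≤ M * bS p u v) →
      (∀ t ∈ I, ∀ x, |z t x| ≤ (A * (1 + nsq x)) * (A * (1 + nsq x)) * gf (cv f (KK t) x) (cv g (KK t) x)) →
      UGB I (fun t x => P (cv f (KK t) x) (cv g (KK t) x) * z t x) := by
    intro P gf z hP hzb
    refine UGB_of_poly (A := A ^ 2 * M) uS (by positivity) fun t ht x => ?_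
    have h := tbd (hP _ _ (wp t ht x) (vp t ht x)) (hzb t ht x) (by nlinarith [L1 x])
    rw [abs_of_pos (bS_pos (wp t ht x) (vp t ht x))]
    refine h.trans (le_of_eq ?_)
    ring
  have up : ∀ {z c L : ℝ}, 0 ≤ c → 1 ≤ L → |z| ≤ L * c → |z| ≤ L * L * c := by
    intro z c L hc hL h
    refine h.trans (mul_le_mul_of_nonneg_right ?_ hc)
    nlinarith
  have L0 : ∀ x : Plane, 0 ≤ A * (1 + nsq x) := fun x => (zero_le_one).trans (L1 x)
  have g1 := fun i => gen (Pu p) (fun u _ => u) (fun t x => cv f (Kd i t) x)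
    (fun u v hu hv => (hMb u v hu hv).2.1) (fun t ht x => up (wp t ht x).le (L1 x) (lw t ht x i))
  have g2 := fun i => gen (Pu p) (fun u _ => u) (fun t x => cv f (Kdd i t) x)
    (fun u v hu hv => (hMb u v hu hv).2.1) (fun t ht x => up (wp t ht x).le (L1 x) (lww t ht x i))
  have g3 := fun i => gen (Pv p) (fun _ v => v) (fun t x => cv g (Kd i t) x)
    (fun u v hu hv => (hMb u v hu hv).2.2.1) (fun t ht x => up (vp t ht x).le (L1 x) (lv t ht x i))
  have g4 := fun i => gen (Pv p) (fun _ v => v) (fun t x => cv g (Kdd i t) x)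
    (fun u v hu hv => (hMb u v hu hv).2.2.1) (fun t ht x => up (vp t ht x).le (L1 x) (lvv t ht x i))
  have g5 := fun i => gen (Puu p) (fun u _ => u * u) (fun t x => cv f (Kd i t) x * cv f (Kd i t) x)
    (fun u v hu hv => (hMb u v hu hv).2.2.2.1)
    (fun t ht x => mul2 (L0 x) (lw t ht x i) (lw t ht x i))
  have g6 := fun i => gen (Puv p) (fun u v => u * v) (fun t x => cv f (Kd i t) x * cv g (Kd i t) x)
    (fun u v hu hv => (hMb u v hu hv).2.2.2.2.1)
    (fun t ht x => mul2 (L0 x) (lw t ht x i) (lv t ht x i))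
  have g7 := fun i => gen (Pvv p) (fun _ v => v * v) (fun t x => cv g (Kd i t) x * cv g (Kd i t) x)
    (fun u v hu hv => (hMb u v hu hv).2.2.2.2.2)
    (fun t ht x => mul2 (L0 x) (lv t ht x i) (lv t ht x i))
  have uP : UGB I (fun t x => Ph p (cv f (KK t) x) (cv g (KK t) x)) := by
    refine (uS.const_mul M).mono fun t ht x => ((hMb _ _ (wp t ht x) (vp t ht x)).1).trans ?_
    exact le_abs_self _
  -- continuity
  have c0 := fun (t : ℝ) (k : ℝ → Plane → ℝ) (hk : Continuous (k t)) => cv_cont hf hfc hk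
  have d0 := fun (t : ℝ) (k : ℝ → Plane → ℝ) (hk : Continuous (k t)) => cv_cont hg hgc hk
  have cP := fun t (ht : t ∈ I) => P_cont (p := p) (c0 t KK (KK_cont t)) (d0 t KK (KK_cont t))
    (wp t ht) (vp t ht)
  have cfd := fun t i => c0 t (Kd i) (Kd_cont i t)
  have cfdd := fun t i => c0 t (Kdd i) (Kdd_cont i t)
  have cgd := fun t i => d0 t (Kd i) (Kd_cont i t)
  have cgdd := fun t i => d0 t (Kdd i) (Kdd_cont i t)
  have uQ : ∀ i, UGB I (fun t x => QQ p f g t x i) := fun i => by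
    refine (((g5 i).add ((g6 i).const_mul 2)).add (g7 i)).mono fun t ht x => le_of_eq ?_
    unfold QQ; congr 1; ring
  have cQ : ∀ i, ∀ t ∈ I, Continuous (fun x => QQ p f g t x i) := fun i t ht => by
    obtain ⟨h1, h2, h3, h4, h5, h6⟩ := cP t ht
    have := cfd t i; have := cgd t i
    unfold QQ; fun_prop
  have key := evol (t₀ := t₀) (I := I)
    (b := fun t x => Ph p (cv f (KK t) x) (cv g (KK t) x))
    (bt := fun t x => Pu p (cv f (KK t) x) (cv g (KK t) x) *
        (cv f (Kdd false t) x + cv f (Kdd true t) x) +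
      Pv p (cv f (KK t) x) (cv g (KK t) x) * (cv g (Kdd false t) x + cv g (Kdd true t) x))
    (b1 := fun i t x => Pu p (cv f (KK t) x) (cv g (KK t) x) * cv f (Kd i t) x +
      Pv p (cv f (KK t) x) (cv g (KK t) x) * cv g (Kd i t) x)
    (b2 := fun i t x =>
      ((Puu p (cv f (KK t) x) (cv g (KK t) x) * cv f (Kd i t) x +
        Puv p (cv f (KK t) x) (cv g (KK t) x) * cv g (Kd i t) x) * cv f (Kd i t) x +
        Pu p (cv f (KK t) x) (cv g (KK t) x) * cv f (Kdd i t) x) +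
      ((Puv p (cv f (KK t) x) (cv g (KK t) x) * cv f (Kd i t) x +
        Pvv p (cv f (KK t) x) (cv g (KK t) x) * cv g (Kd i t) x) * cv g (Kd i t) x +
        Pv p (cv f (KK t) x) (cv g (KK t) x) * cv g (Kdd i t) x))
    hI uP ?_ ?_ ?_ ?_ ?_ ?_ ?_ ?_ ?_
  · refine ⟨((uQ false).integrable hI0 (cQ false t₀ hI0)).add ((uQ true).integrable hI0 (cQ true t₀ hI0)), ?_⟩
    convert! key using 1
    rw [← integral_neg]
    congr 1
    ext x
    unfold QQ
    ring
  · refine ((g2 false).add ((g2 true).add ((g4 false).add (g4 true)))).mono fun t ht x => le_of_eq ?_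
    congr 1; ring
  · intro i
    exact (g1 i).add (g3 i)
  · intro i
    refine ((uQ i).add ((g2 i).add (g4 i))).mono fun t ht x => le_of_eq ?_
    unfold QQ; congr 1; ring
  · exact fun t ht => (cP t ht).1
  · intro t ht
    obtain ⟨h1, h2, h3, h4, h5, h6⟩ := cP t ht
    have := cfdd t false; have := cgdd t false
    have := cfdd t true; have := cgdd t true
    fun_prop
  · intro i t ht
    obtain ⟨h1, h2, h3, h4, h5, h6⟩ := cP t ht
    have := cfd t i; have := cgd t i
    fun_prop
  · intro i t ht
    obtain ⟨h1, h2, h3, h4, h5, h6⟩ := cP t ht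
    have := cfd t i; have := cgd t i
    have := cfdd t i; have := cgdd t i
    fun_prop
  · intro t ht x
    exact Ph_d hp (cv_time hf hfc (tpos t ht) x) (cv_time hg hgc (tpos t ht) x) (wp t ht x) (vp t ht x)
  · intro i t ht x
    have l1 := lin_line hf hfc t i x
    have l2 := lin_line hg hgc t i x
    have l3 := lin_line2 hf hfc t i x
    have l4 := lin_line2 hg hgc t i x
    unfold HasLineDerivAt at *
    have m1 := Pu_d hp l1 l2 (wp t ht _) (vp t ht _)
    have m2 := Pv_d hp l1 l2 (wp t ht _) (vp t ht _)
    have := (m1.mul l3).add (m2.mul l4)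
    simp only [zero_smul, add_zero] at this
    exact this

/-- Bilinear embedding in differential form. -/
theorem Edecay {p : ℝ} (hp : 2 ≤ p) {f g : Plane → ℝ} (hf : Continuous f)
    (hfc : HasCompactSupport f) (hf0 : ∀ y, 0 ≤ f y)
    (hg : Continuous g) (hgc : HasCompactSupport g) (hg0 : ∀ y, 0 ≤ g y) :
    ∃ E E' : ℝ → ℝ, ∀ t, 0 < t → HasDerivAt E (E' t) t ∧ 0 ≤ E t ∧
      (∀ i k, 2 * ∫ x, |cv f (Kd i t) x| * |cv g (Kd k t) x| ≤ - E' t) ∧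
      E t ≤ (∫ x, (cv f (KK t) x) ^ p) + 5 * p * ∫ x, (cv g (KK t) x) ^ (p / (p - 1)) := by
  have p0 : 0 < p := by linarith
  have q0 : 0 < p / (p - 1) := div_pos (by linarith) (by linarith)
  by_cases hfz : ∀ y, f y = 0
  · refine ⟨fun _ => 0, fun _ => 0, fun t ht => ⟨hasDerivAt_const _ _, le_rfl, fun i k => ?_, ?_⟩⟩
    · simp [cv, hfz]
    · apply add_nonneg (integral_nonneg fun x => Real.rpow_nonneg (cv_K_nonneg hf0 ht x) _)
      exact mul_nonneg (by linarith) (integral_nonneg fun x => Real.rpow_nonneg (cv_K_nonneg hg0 ht x) _)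
  by_cases hgz : ∀ y, g y = 0
  · refine ⟨fun _ => 0, fun _ => 0, fun t ht => ⟨hasDerivAt_const _ _, le_rfl, fun i k => ?_, ?_⟩⟩
    · simp [cv, hgz]
    · apply add_nonneg (integral_nonneg fun x => Real.rpow_nonneg (cv_K_nonneg hf0 ht x) _)
      exact mul_nonneg (by linarith) (integral_nonneg fun x => Real.rpow_nonneg (cv_K_nonneg hg0 ht x) _)
  push Not at hfz hgz
  obtain ⟨y₀, hy⟩ := hfz
  obtain ⟨z₀, hz⟩ := hgz
  refine ⟨fun t => ∫ x, Ph p (cv f (KK t) x) (cv g (KK t) x),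
    fun t => - ∫ x, (QQ p f g t x false + QQ p f g t x true), fun t ht => ?_⟩
  obtain ⟨hQi, hd⟩ := E_deriv hp hf hfc hf0 hy hg hgc hg0 hz ht
  have wp : ∀ x, 0 < cv f (KK t) x := fun x => cv_K_pos hf hfc hf0 hy ht x
  have vp : ∀ x, 0 < cv g (KK t) x := fun x => cv_K_pos hg hgc hg0 hz ht x
  have ti : t ∈ Icc t t := ⟨le_rfl, le_rfl⟩
  have cw := cv_cont hf hfc (KK_cont t)
  have cv' := cv_cont hg hgc (KK_cont t)
  refine ⟨hd, integral_nonneg fun x => Ph_nonneg hp (wp x) (vp x), fun i k => ?_, ?_⟩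
  · rw [neg_neg, ← integral_const_mul]
    have u1 := ((cv_UGB hf hfc (hi := t) ht).2 i).1
    have u2 := ((cv_UGB hg hgc (hi := t) ht).2 k).1
    have c1 := cv_cont hf hfc (Kd_cont i t)
    have c2 := cv_cont hg hgc (Kd_cont k t)
    have i1 := ((u1.mul u2).integrable ti (by fun_prop)).abs
    simp only [abs_mul] at i1
    refine integral_mono (i1.const_mul 2) hQi fun x => ?_
    simp only
    have a0 := Phess hp (wp x) (vp x) (cv f (Kd false t) x) (cv g (Kd false t) x)
    have a1 := Phess hp (wp x) (vp x) (cv f (Kd true t) x) (cv g (Kd true t) x)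
    have hTY := TY hp (wp x) (vp x)
    have hT := bT_pos (p := p) (wp x) (vp x)
    have hZ : 0 < bY p (cv g (KK t) x) / cv g (KK t) x ^ 2 := div_pos (bY_pos (vp x)) (pow_pos (vp x) 2)
    change _ ≤ QQ p f g t x false + QQ p f g t x true
    change _ ≤ QQ p f g t x false at a0
    change _ ≤ QQ p f g t x true at a1
    have s1 : bT p (cv f (KK t) x) (cv g (KK t) x) * cv f (Kd i t) x ^ 2 ≤
        bT p (cv f (KK t) x) (cv g (KK t) x) * (cv f (Kd false t) x ^ 2 + cv f (Kd true t) x ^ 2) := by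
      apply mul_le_mul_of_nonneg_left _ hT.le
      cases i
      · nlinarith [sq_nonneg (cv f (Kd true t) x)]
      · nlinarith [sq_nonneg (cv f (Kd false t) x)]
    have s2 : bY p (cv g (KK t) x) / cv g (KK t) x ^ 2 * cv g (Kd k t) x ^ 2 ≤
        bY p (cv g (KK t) x) / cv g (KK t) x ^ 2 * (cv g (Kd false t) x ^ 2 + cv g (Kd true t) x ^ 2) := by
      apply mul_le_mul_of_nonneg_left _ hZ.le
      cases k
      · nlinarith [sq_nonneg (cv g (Kd true t) x)]
      · nlinarith [sq_nonneg (cv g (Kd false t) x)]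
    have s3 : 2 * (|cv f (Kd i t) x| * |cv g (Kd k t) x|) ≤
        bT p (cv f (KK t) x) (cv g (KK t) x) * cv f (Kd i t) x ^ 2 +
        bY p (cv g (KK t) x) / cv g (KK t) x ^ 2 * cv g (Kd k t) x ^ 2 := by
      rw [← sq_abs (cv f (Kd i t) x), ← sq_abs (cv g (Kd k t) x)]
      have n1 := abs_nonneg (cv f (Kd i t) x)
      have n2 := abs_nonneg (cv g (Kd k t) x)
      generalize |cv f (Kd i t) x| = a at *
      generalize |cv g (Kd k t) x| = b at *
      generalize bT p (cv f (KK t) x) (cv g (KK t) x) = T at *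
      generalize bY p (cv g (KK t) x) / cv g (KK t) x ^ 2 = Z at *
      have e1 : (2 * (a * b)) ^ 2 ≤ (T * a ^ 2 + Z * b ^ 2) ^ 2 := by
        have : (a * b) ^ 2 ≤ (T * Z) * (a * b) ^ 2 := by nlinarith [sq_nonneg (a * b)]
        nlinarith [sq_nonneg (T * a ^ 2 - Z * b ^ 2)]
      exact le_of_sq_le_sq e1 (by positivity)
    linarith
  · have e1 := (cv_UGB hf hfc (hi := t) ht).1
    have e2 := (cv_UGB hg hgc (hi := t) ht).1
    have r1 := (e1.rpow p0 fun s hs x => cv_K_nonneg hf0 (ht.trans_le hs.1) x).integrable ti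
      (cw.rpow_const fun x => Or.inl (wp x).ne')
    have r2 := (e2.rpow q0 fun s hs x => cv_K_nonneg hg0 (ht.trans_le hs.1) x).integrable ti
      (cv'.rpow_const fun x => Or.inl (vp x).ne')
    rw [← integral_const_mul, ← integral_add r1 (r2.const_mul _)]
    refine integral_mono_of_nonneg (Eventually.of_forall fun x => Ph_nonneg hp (wp x) (vp x))
      (r1.add (r2.const_mul _)) (Eventually.of_forall fun x => Ph_le hp (wp x) (vp x))

lemma KK_mass_sub {t : ℝ} (ht : 0 < t) (x : Plane) : ∫ y, KK t (x - y) = 1 := by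
  rw [integral_sub_left_eq_self (KK t) volume x]
  exact KK_mass ht

lemma KK_int_sub {t : ℝ} (ht : 0 < t) (x : Plane) : Integrable (fun y => KK t (x - y)) :=
  (KK_int ht).comp_sub_left x

lemma cv_mass {f : Plane → ℝ} (hf : Continuous f) (hc : HasCompactSupport f) {t : ℝ} (ht : 0 < t) :
    ∫ x, cv f (KK t) x = ∫ x, f x := by
  have := integral_convolution (ContinuousLinearMap.mul ℝ ℝ) (μ := (volume : Measure Plane))
    (ν := (volume : Measure Plane))
    (hf.integrable_of_hasCompactSupport hc) (KK_int ht)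
  rw [KK_mass ht] at this
  simpa [convolution, cv] using this

lemma cv_integrable {f : Plane → ℝ} (hf : Continuous f) (hc : HasCompactSupport f) {t : ℝ}
    (ht : 0 < t) : Integrable (cv f (KK t)) :=
  ((cv_UGB hf hc (hi := t) ht).1).integrable (t := t) ⟨le_rfl, le_rfl⟩ (cv_cont hf hc (KK_cont t))

lemma rpow_tangent {a b r : ℝ} (ha : 0 ≤ a) (hb : 0 < b) (hr : 1 ≤ r) :
    b ^ r + r * b ^ (r - 1) * (a - b) ≤ a ^ r := by
  have h := one_add_mul_self_le_rpow_one_add (s := a / b - 1)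
    (by linarith [div_nonneg ha hb.le]) hr
  have e : 1 + (a / b - 1) = a / b := by ring
  rw [e, Real.div_rpow ha hb.le, le_div_iff₀ (Real.rpow_pos_of_pos hb _)] at h
  refine le_trans (le_of_eq ?_) h
  rw [Real.rpow_sub_one hb.ne']
  field_simp

lemma hc_rpow {f : Plane → ℝ} (hc : HasCompactSupport f) {r : ℝ} (hr : r ≠ 0) :
    HasCompactSupport (fun y => f y ^ r) :=
  hc.comp_left (g := fun a : ℝ => a ^ r) (Real.zero_rpow hr)

lemma jensen_pt {f : Plane → ℝ} (hf : Continuous f) (hc : HasCompactSupport f)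
    (h0 : ∀ y, 0 ≤ f y) {t r : ℝ} (ht : 0 < t) (hr : 1 ≤ r) (x : Plane) :
    (cv f (KK t) x) ^ r ≤ cv (fun y => f y ^ r) (KK t) x := by
  have r0 : r ≠ 0 := by linarith
  have hfr : Continuous (fun y => f y ^ r) := hf.rpow_const (fun _ => Or.inr (by linarith))
  rcases (cv_K_nonneg h0 ht x).eq_or_lt with h | h
  · rw [← h, Real.zero_rpow r0]
    exact cv_K_nonneg (fun y => Real.rpow_nonneg (h0 y) _) ht x
  · set b := cv f (KK t) x with hb
    have i1 := cv_int hf hc (KK_cont t) x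
    have i2 := cv_int hfr (hc_rpow hc r0) (KK_cont t) x
    have i3 := KK_int_sub ht x
    have i5 : Integrable (fun y => r * b ^ (r - 1) * (f y * KK t (x - y) - b * KK t (x - y))) :=
      (i1.sub (i3.const_mul _)).const_mul _
    have e : ∫ y, (b ^ r * KK t (x - y) + r * b ^ (r - 1) * (f y * KK t (x - y) - b * KK t (x - y)))
        = b ^ r := by
      rw [integral_add (i3.const_mul _) i5, integral_const_mul,
        integral_const_mul, integral_sub i1 (i3.const_mul _), integral_const_mul, KK_mass_sub ht]
      have : ∫ y, f y * KK t (x - y) = b := rfl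
      rw [this]; ring
    rw [← e]
    unfold cv
    refine integral_mono ((i3.const_mul _).add i5) i2 fun y => ?_
    have := mul_le_mul_of_nonneg_right (rpow_tangent (h0 y) h hr) (KK_pos ht (x - y)).le
    refine le_trans (le_of_eq ?_) this
    simp only
    ring

lemma jensen {f : Plane → ℝ} (hf : Continuous f) (hc : HasCompactSupport f)
    (h0 : ∀ y, 0 ≤ f y) {t r : ℝ} (ht : 0 < t) (hr : 1 ≤ r) :
    ∫ x, (cv f (KK t) x) ^ r ≤ ∫ x, f x ^ r := by
  have r0 : r ≠ 0 := by linarith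
  have hfr : Continuous (fun y => f y ^ r) := hf.rpow_const (fun _ => Or.inr (by linarith))
  rw [← cv_mass hfr (hc_rpow hc r0) ht]
  refine integral_mono_of_nonneg (Eventually.of_forall fun x => Real.rpow_nonneg (cv_K_nonneg h0 ht x) _)
    (cv_integrable hfr (hc_rpow hc r0) ht) (Eventually.of_forall fun x => jensen_pt hf hc h0 ht hr x)

lemma KK_le {t : ℝ} (ht : 0 < t) (z : Plane) : KK t z ≤ (4 * π * t)⁻¹ := by
  unfold KK
  refine mul_le_of_le_one_right (by positivity) (Real.exp_le_one_iff.2 ?_)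
  have := nsq_nonneg z
  exact div_nonpos_of_nonpos_of_nonneg (by linarith) (by positivity)

lemma cv_sup {f : Plane → ℝ} (hf : Continuous f) (hc : HasCompactSupport f) {t : ℝ} (ht : 0 < t)
    (x : Plane) : |cv f (KK t) x| ≤ (4 * π * t)⁻¹ * ∫ y, |f y| := by
  refine (cv_abs_le x).trans ?_
  rw [← integral_const_mul]
  have hi := (hf.integrable_of_hasCompactSupport hc (μ := volume)).abs
  refine integral_mono_of_nonneg (Eventually.of_forall fun y => by positivity) (hi.const_mul _)
    (Eventually.of_forall fun y => ?_)
  simp only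
  rw [mul_comm, abs_of_pos (KK_pos ht _)]
  exact mul_le_mul_of_nonneg_right (KK_le ht _) (abs_nonneg _)

lemma nsq_KK {t : ℝ} (ht : 0 < t) (z : Plane) : nsq z * KK t z ≤ 16 * t * KK (2 * t) z := by
  have h1 := Real.add_one_le_exp (nsq z / (8 * t))
  have e : Real.exp (-(nsq z) / (4 * t)) = Real.exp (-(nsq z) / (4 * (2 * t))) *
      Real.exp (-(nsq z) / (8 * t)) := by
    rw [← Real.exp_add]; congr 1; field_simp; ring
  have e2 : Real.exp (nsq z / (8 * t)) * Real.exp (-(nsq z) / (8 * t)) = 1 := by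
    rw [← Real.exp_add, neg_div, add_neg_cancel, Real.exp_zero]
  have h2 : nsq z / (8 * t) * Real.exp (-(nsq z) / (8 * t)) ≤ 1 := by
    rw [← e2]
    exact mul_le_mul_of_nonneg_right (by linarith) (Real.exp_pos _).le
  unfold KK
  rw [e]
  have h3 : 0 ≤ (4 * π * t)⁻¹ * Real.exp (-(nsq z) / (4 * (2 * t))) := by positivity
  have h4 := mul_le_mul_of_nonneg_left h2 h3
  have h5 := mul_le_mul_of_nonneg_left h4 (by positivity : 0 ≤ 8 * t)
  refine le_trans (le_of_eq ?_) (h5.trans (le_of_eq ?_))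
  · field_simp
  · field_simp; ring

lemma cv_unif {f : Plane → ℝ} (hf : Continuous f) (hc : HasCompactSupport f) {ε : ℝ} (hε : 0 < ε) :
    ∃ δ > 0, ∀ s, 0 < s → s < δ → ∀ x, |cv f (KK s) x - f x| ≤ ε := by
  obtain ⟨M, hM⟩ := hf.bounded_above_of_compact_support hc
  have M0 : 0 ≤ M := (norm_nonneg _).trans (hM 0)
  obtain ⟨d, d0, hd⟩ := Metric.uniformContinuous_iff.1 (hc.uniformContinuous_of_continuous hf) (ε/2) (by positivity)
  set A := 2 * M / d ^ 2 with hA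
  have A0 : 0 ≤ A := by positivity
  have key : ∀ x y, |f y - f x| ≤ ε / 2 + A * nsq (x - y) := by
    intro x y
    have hn := nsq_nonneg (x - y)
    by_cases h : nsq (x - y) < d ^ 2
    · have : dist y x < d := by
        rw [dist_comm, dist_eq_norm, Prod.norm_def, max_lt_iff, Real.norm_eq_abs, Real.norm_eq_abs]
        unfold nsq at h
        exact ⟨abs_lt_of_sq_lt_sq (by nlinarith [sq_nonneg (x - y).2]) d0.le,
          abs_lt_of_sq_lt_sq (by nlinarith [sq_nonneg (x - y).1]) d0.le⟩
      have := hd this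
      rw [Real.dist_eq] at this
      nlinarith [mul_nonneg A0 hn]
    · push Not at h
      have h1 : 2 * M ≤ A * nsq (x - y) := by
        rw [hA, div_mul_eq_mul_div, le_div_iff₀ (by positivity)]
        exact mul_le_mul_of_nonneg_left h (by positivity)
      have h2 := hM x; have h3 := hM y
      rw [Real.norm_eq_abs] at h2 h3
      have := abs_sub (f y) (f x)
      linarith
  refine ⟨ε / 2 / (16 * A + 1), by positivity, fun s s0 hs x => ?_⟩
  have i1 := cv_int hf hc (KK_cont s) x
  have i3 := KK_int_sub s0 x
  have i4 := KK_int_sub (t := 2 * s) (by positivity) x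
  have e : cv f (KK s) x - f x = ∫ y, (f y * KK s (x - y) - f x * KK s (x - y)) := by
    rw [integral_sub i1 (i3.const_mul _), integral_const_mul, KK_mass_sub s0, mul_one]; rfl
  rw [e]
  have e2 : ∫ y, (ε / 2 * KK s (x - y) + A * (16 * s) * KK (2 * s) (x - y)) = ε / 2 + A * (16 * s) := by
    rw [integral_add (i3.const_mul _) (i4.const_mul _), integral_const_mul, integral_const_mul,
      KK_mass_sub s0, KK_mass_sub (by positivity)]
    ring
  refine abs_integral_le_integral_abs.trans (le_trans ?_ ((le_of_eq e2).trans ?_))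
  · refine integral_mono_of_nonneg (Eventually.of_forall fun y => abs_nonneg _)
      ((i3.const_mul _).add (i4.const_mul _)) (Eventually.of_forall fun y => ?_)
    simp only
    rw [← sub_mul, abs_mul, abs_of_pos (KK_pos s0 _)]
    have h1 := mul_le_mul_of_nonneg_right (key x y) (KK_pos s0 (x - y)).le
    have h2 := mul_le_mul_of_nonneg_left (nsq_KK s0 (x - y)) A0
    nlinarith
  · rw [lt_div_iff₀ (by positivity)] at hs
    nlinarith

/-- the pairing along the heat flow -/
def HH (h g : Plane → ℝ) (t : ℝ) : ℝ := ∫ x, cv h (KK t) x * cv g (KK t) x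

lemma cvsup_int {h g : Plane → ℝ} (hh : Continuous h) (hhc : HasCompactSupport h)
    (hg : Continuous g) (hgc : HasCompactSupport g) {t : ℝ} (ht : 0 < t) :
    |HH h g t| ≤ (4 * π * t)⁻¹ * ((∫ y, |h y|) * ∫ y, |g y|) := by
  unfold HH
  refine abs_integral_le_integral_abs.trans ?_
  rw [← cv_mass hg.abs (habs hgc) ht, ← mul_assoc, ← integral_const_mul]
  refine integral_mono_of_nonneg (Eventually.of_forall fun y => abs_nonneg _)
    ((cv_integrable hg.abs (habs hgc) ht).const_mul _) (Eventually.of_forall fun y => ?_)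
  simp only
  rw [abs_mul]
  exact mul_le_mul (cv_sup hh hhc ht y) (cv_abs_K ht y) (abs_nonneg _)
    (mul_nonneg (by positivity) (integral_nonneg fun y => abs_nonneg _))

lemma HH_infty {h g : Plane → ℝ} (hh : Continuous h) (hhc : HasCompactSupport h)
    (hg : Continuous g) (hgc : HasCompactSupport g) :
    Tendsto (HH h g) atTop (nhds 0) := by
  have h1 : Tendsto (fun t : ℝ => (4 * π * t)⁻¹ * ((∫ y, |h y|) * ∫ y, |g y|)) atTop (nhds 0) := by
    have : Tendsto (fun t : ℝ => 4 * π * t) atTop atTop :=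
      tendsto_id.const_mul_atTop (by positivity)
    simpa using this.inv_tendsto_atTop.mul_const ((∫ y, |h y|) * ∫ y, |g y|)
  refine squeeze_zero_norm' ?_ h1
  filter_upwards [eventually_gt_atTop 0] with t ht
  exact cvsup_int hh hhc hg hgc ht

lemma HH_zero {h g : Plane → ℝ} (hh : Continuous h) (hhc : HasCompactSupport h)
    (hg : Continuous g) (hgc : HasCompactSupport g) :
    Tendsto (HH h g) (nhdsWithin 0 (Ioi 0)) (nhds (∫ x, h x * g x)) := by
  rw [Metric.tendsto_nhdsWithin_nhds]
  intro ε hε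
  have hi := (hh.integrable_of_hasCompactSupport hhc (μ := volume))
  have gi := (hg.integrable_of_hasCompactSupport hgc (μ := volume))
  set N := (∫ y, |h y|) + (∫ y, |g y|) + 1 with hN
  have n1 : 0 ≤ ∫ y, |h y| := integral_nonneg fun y => abs_nonneg _
  have n2 : 0 ≤ ∫ y, |g y| := integral_nonneg fun y => abs_nonneg _
  have N0 : 0 < N := by positivity
  obtain ⟨d1, d10, hd1⟩ := cv_unif hh hhc (ε := ε / (2 * N)) (by positivity)
  obtain ⟨d2, d20, hd2⟩ := cv_unif hg hgc (ε := ε / (2 * N)) (by positivity)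
  refine ⟨min d1 d2, lt_min d10 d20, fun s s0 hs => ?_⟩
  have s0' : 0 < s := s0
  rw [Real.dist_eq, sub_zero, abs_of_pos s0'] at hs
  have l1 := hd1 s s0' (hs.trans_le (min_le_left _ _))
  have l2 := hd2 s s0' (hs.trans_le (min_le_right _ _))
  have ii := ((cv_UGB hh hhc (hi := s) s0').1.mul (cv_UGB hg hgc (hi := s) s0').1).integrable
    (t := s) ⟨le_rfl, le_rfl⟩ ((cv_cont hh hhc (KK_cont s)).mul (cv_cont hg hgc (KK_cont s)))
  have jj : Integrable (fun x => h x * g x) :=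
    (hh.mul hg).integrable_of_hasCompactSupport hhc.mul_right
  have cgi := cv_integrable hg.abs (habs hgc) s0'
  rw [Real.dist_eq]
  unfold HH
  rw [← integral_sub ii jj]
  have e : ∫ x, (ε / (2 * N) * cv (fun y => |g y|) (KK s) x + ε / (2 * N) * |h x|) =
      ε / (2 * N) * ((∫ y, |g y|) + ∫ y, |h y|) := by
    rw [integral_add (cgi.const_mul _) (hi.abs.const_mul _), integral_const_mul, integral_const_mul,
      cv_mass hg.abs (habs hgc) s0']
    ring
  have fin : ε / (2 * N) * ((∫ y, |g y|) + ∫ y, |h y|) < ε := by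
    rw [div_mul_eq_mul_div, div_lt_iff₀ (by positivity)]
    apply mul_lt_mul_of_pos_left _ hε
    linarith
  refine lt_of_le_of_lt (abs_integral_le_integral_abs.trans (le_trans ?_ e.le)) fin
  refine integral_mono_of_nonneg (Eventually.of_forall fun y => abs_nonneg _)
      ((cgi.const_mul _).add (hi.abs.const_mul _)) (Eventually.of_forall fun y => ?_)
  simp only
  have e3 : cv h (KK s) y * cv g (KK s) y - h y * g y =
    (cv h (KK s) y - h y) * cv g (KK s) y + (cv g (KK s) y - g y) * h y := by ring
  rw [e3]
  refine (abs_add_le _ _).trans (add_le_add ?_ ?_)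
  · rw [abs_mul]
    exact mul_le_mul (l1 y) (cv_abs_K s0' y) (abs_nonneg _) (by positivity)
  · rw [abs_mul]
    exact mul_le_mul_of_nonneg_right (l2 y) (abs_nonneg _)

lemma absbil {H D F F' : ℝ → ℝ} {L B : ℝ} (hH : ∀ t, 0 < t → HasDerivAt H (D t) t)
    (hF : ∀ t, 0 < t → HasDerivAt F (F' t) t) (hF0 : ∀ t, 0 < t → 0 ≤ F t)
    (hD : ∀ t, 0 < t → |D t| ≤ - F' t) (hB : ∀ t, 0 < t → F t ≤ B)
    (h0 : Tendsto H (nhdsWithin 0 (Ioi 0)) (nhds L)) (hinf : Tendsto H atTop (nhds 0)) :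
    |L| ≤ B := by
  have anti : ∀ G G' : ℝ → ℝ, (∀ t, 0 < t → HasDerivAt G (G' t) t) → (∀ t, 0 < t → G' t ≤ 0) →
      AntitoneOn G (Ioi 0) := by
    intro G G' h1 h2
    refine antitoneOn_of_deriv_nonpos (convex_Ioi 0) (fun t ht => (h1 t ht).continuousAt.continuousWithinAt)
      (fun t ht => ?_) (fun t ht => ?_)
    · rw [interior_Ioi] at ht
      exact (h1 t ht).differentiableAt.differentiableWithinAt
    · rw [interior_Ioi] at ht
      rw [(h1 t ht).deriv]; exact h2 t ht
  have a1 := anti (fun t => F t + H t) (fun t => F' t + D t) (fun t ht => (hF t ht).add (hH t ht))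
    (fun t ht => by have := le_abs_self (D t); have := hD t ht; linarith)
  have a2 := anti (fun t => F t - H t) (fun t => F' t - D t) (fun t ht => (hF t ht).sub (hH t ht))
    (fun t ht => by have := neg_abs_le (D t); have := hD t ht; linarith)
  have key : ∀ s, 0 < s → |H s| ≤ B := by
    intro s hs
    rw [abs_le]
    constructor
    · have : (0:ℝ) ≤ H s + B := by
        refine le_of_tendsto hinf ?_
        filter_upwards [eventually_ge_atTop s] with T hT
        have hT0 := hs.trans_le hT
        have := a1 hs hT0 hT
        simp only at this
        linarith [hB s hs, hF0 T hT0]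
      linarith
    · have : H s - B ≤ (0:ℝ) := by
        refine ge_of_tendsto hinf ?_
        filter_upwards [eventually_ge_atTop s] with T hT
        have hT0 := hs.trans_le hT
        have := a2 hs hT0 hT
        simp only at this
        linarith [hB s hs, hF0 T hT0]
      linarith
  refine le_of_tendsto h0.abs ?_
  filter_upwards [self_mem_nhdsWithin] with s hs
  exact key s hs

lemma cv_sub {a b k : Plane → ℝ} (ha : Continuous a) (hac : HasCompactSupport a)
    (hb : Continuous b) (hbc : HasCompactSupport b) (hk : Continuous k) (x : Plane) :
    cv (fun y => a y - b y) k x = cv a k x - cv b k x := by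
  unfold cv
  simp only [sub_mul]
  exact integral_sub (cv_int ha hac hk x) (cv_int hb hbc hk x)

lemma ppow (a p : ℝ) (hp : 0 < p) : (max a 0) ^ p + (max (-a) 0) ^ p = |a| ^ p := by
  rcases le_total 0 a with h | h
  · rw [max_eq_left h, max_eq_right (by linarith), abs_of_nonneg h, Real.zero_rpow hp.ne', add_zero]
  · rw [max_eq_right h, max_eq_left (by linarith), abs_of_nonpos h, Real.zero_rpow hp.ne', zero_add]

lemma bil {p : ℝ} (hp : 2 ≤ p) {f g : Plane → ℝ} (hf : Continuous f) (hfc : HasCompactSupport f)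
    (hg : Continuous g) (hgc : HasCompactSupport g) {H D : ℝ → ℝ} {L : ℝ} {i k : Bool}
    (hH : ∀ t, 0 < t → HasDerivAt H (D t) t)
    (hD : ∀ t, 0 < t → |D t| ≤ 2 * ∫ x, |cv f (Kd i t) x| * |cv g (Kd k t) x|)
    (h0 : Tendsto H (nhdsWithin 0 (Ioi 0)) (nhds L)) (hinf : Tendsto H atTop (nhds 0)) :
    |L| ≤ 2 * (∫ x, |f x| ^ p) + 10 * p * ∫ x, |g x| ^ (p / (p - 1)) := by
  have q1 : 1 ≤ p / (p - 1) := by rw [le_div_iff₀ (by linarith)]; linarith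
  have p1 : 1 ≤ p := by linarith
  have gen : ∀ f : Plane → ℝ, Continuous f → HasCompactSupport f →
      Continuous (fun y => max (f y) 0) ∧ HasCompactSupport (fun y => max (f y) 0) ∧
      Continuous (fun y => max (-f y) 0) ∧ HasCompactSupport (fun y => max (-f y) 0) ∧
      (∀ r : ℝ, 1 ≤ r → (∫ x, (max (f x) 0) ^ r) + (∫ x, (max (-f x) 0) ^ r) = ∫ x, |f x| ^ r) ∧
      (∀ i t x, |cv f (Kd i t) x| ≤ |cv (fun y => max (f y) 0) (Kd i t) x| + |cv (fun y => max (-f y) 0) (Kd i t) x|) := by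
    intro f hf hfc
    have c1 : Continuous (fun y => max (f y) 0) := by fun_prop
    have c2 : Continuous (fun y => max (-f y) 0) := by fun_prop
    have s1 : HasCompactSupport (fun y => max (f y) 0) :=
      hfc.comp_left (g := fun a : ℝ => max a 0) (by simp)
    have s2 : HasCompactSupport (fun y => max (-f y) 0) :=
      hfc.comp_left (g := fun a : ℝ => max (-a) 0) (by simp)
    refine ⟨c1, s1, c2, s2, fun r hr => ?_, fun i t x => ?_⟩
    · have r0 : r ≠ 0 := by linarith
      rw [← integral_add]
      · simp only [ppow _ r (by linarith : 0 < r)]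
      · exact (c1.rpow_const (fun _ => Or.inr (by linarith))).integrable_of_hasCompactSupport (hc_rpow s1 r0)
      · exact (c2.rpow_const (fun _ => Or.inr (by linarith))).integrable_of_hasCompactSupport (hc_rpow s2 r0)
    · have := cv_sub c1 s1 c2 s2 (Kd_cont i t) x
      have e : (fun y => max (f y) 0 - max (-f y) 0) = f := by
        ext y
        rcases le_total 0 (f y) with h | h
        · rw [max_eq_left h, max_eq_right (by linarith)]; ring
        · rw [max_eq_right h, max_eq_left (by linarith)]; ring
      rw [e] at this
      rw [this]
      exact abs_sub _ _
  obtain ⟨f1, f2, f3, f4, f5, f6⟩ := gen f hf hfc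
  obtain ⟨g1, g2, g3, g4, g5, g6⟩ := gen g hg hgc
  have nn : ∀ (f : Plane → ℝ) y, 0 ≤ max (f y) 0 := fun f y => le_max_right _ _
  have nm : ∀ (f : Plane → ℝ) y, 0 ≤ max (-f y) 0 := fun f y => le_max_right _ _
  have ii : ∀ a b : Plane → ℝ, Continuous a → HasCompactSupport a → Continuous b →
      HasCompactSupport b → ∀ t, 0 < t → Integrable (fun x => |cv a (Kd i t) x| * |cv b (Kd k t) x|) := by
    intro a b ha hac hb hbc t ht
    have u1 := ((cv_UGB ha hac (hi := t) ht).2 i).1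
    have u2 := ((cv_UGB hb hbc (hi := t) ht).2 k).1
    have c1 := cv_cont ha hac (Kd_cont i t)
    have c2 := cv_cont hb hbc (Kd_cont k t)
    have i1 := ((u1.mul u2).integrable (t := t) ⟨le_rfl, le_rfl⟩ (by fun_prop)).abs
    simpa only [abs_mul] using i1
  obtain ⟨E1, E1', h1⟩ := Edecay hp f1 f2 (nn f) g1 g2 (nn g)
  obtain ⟨E2, E2', h2⟩ := Edecay hp f1 f2 (nn f) g3 g4 (nm g)
  obtain ⟨E3, E3', h3⟩ := Edecay hp f3 f4 (nm f) g1 g2 (nn g)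
  obtain ⟨E4, E4', h4⟩ := Edecay hp f3 f4 (nm f) g3 g4 (nm g)
  refine absbil (F := fun t => E1 t + E2 t + E3 t + E4 t) (F' := fun t => E1' t + E2' t + E3' t + E4' t)
    hH (fun t ht => (((h1 t ht).1.add (h2 t ht).1).add (h3 t ht).1).add (h4 t ht).1) ?_ ?_ ?_ h0 hinf
  · intro t ht
    have := (h1 t ht).2.1
    have := (h2 t ht).2.1
    have := (h3 t ht).2.1
    have := (h4 t ht).2.1
    positivity
  · intro t ht
    have a1 := (h1 t ht).2.2.1 i k
    have a2 := (h2 t ht).2.2.1 i k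
    have a3 := (h3 t ht).2.2.1 i k
    have a4 := (h4 t ht).2.2.1 i k
    have i1 := ii _ _ f1 f2 g1 g2 t ht
    have i2 := ii _ _ f1 f2 g3 g4 t ht
    have i3 := ii _ _ f3 f4 g1 g2 t ht
    have i4 := ii _ _ f3 f4 g3 g4 t ht
    have := integral_mono (ii f g hf hfc hg hgc t ht) (((i1.add i2).add i3).add i4) (fun x => by
      refine (mul_le_mul (f6 i t x) (g6 k t x) (abs_nonneg _) (by positivity)).trans (le_of_eq ?_)
      simp only [Pi.add_apply]
      ring)
    have hDt := hD t ht
    rw [integral_add' ((i1.add i2).add i3) i4, integral_add' (i1.add i2) i3, integral_add' i1 i2] at this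
    linarith
  · intro t ht
    have a1 := (h1 t ht).2.2.2
    have a2 := (h2 t ht).2.2.2
    have a3 := (h3 t ht).2.2.2
    have a4 := (h4 t ht).2.2.2
    have b1 := jensen f1 f2 (nn f) ht p1
    have b2 := jensen f3 f4 (nm f) ht p1
    have b3 := mul_le_mul_of_nonneg_left (jensen g1 g2 (nn g) ht q1) (by linarith : 0 ≤ 5 * p)
    have b4 := mul_le_mul_of_nonneg_left (jensen g3 g4 (nm g) ht q1) (by linarith : 0 ≤ 5 * p)
    rw [← f5 p p1, ← g5 _ q1]
    linarith

lemma cv_comm {f f' k k' : Plane → ℝ} {v : Plane} (hf : Continuous f) (hc : HasCompactSupport f)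
    (hf' : Continuous f') (hc' : HasCompactSupport f')
    (hl : ∀ x, HasLineDerivAt ℝ f (f' x) x v) (hk : Continuous k) (hk' : Continuous k')
    (hd : ∀ z, HasDerivAt (fun s : ℝ => k (z + s • v)) (k' z) 0) :
    cv f' k = cv f k' := by
  ext x
  have := ibp_mul (F := f) (F' := f') (G := fun y => k (x - y)) (G' := fun y => - k' (x - y)) (v := v)
    (cv_int hf' hc' hk x) (by simpa using (cv_int hf hc hk' x).neg) (cv_int hf hc hk x) hl
    (fun y => by
      unfold HasLineDerivAt
      have h2 : HasDerivAt (fun s : ℝ => -s) (-1) 0 := hasDerivAt_neg 0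
      have h3 := (hd (x - y)).comp_of_eq 0 h2 (by simp)
      convert! h3 using 1
      · ext s
        simp only [Function.comp]
        congr 1
        rw [neg_smul]; abel
      · simp)
  simp only [mul_neg, integral_neg, neg_inj] at this
  exact this.symm

lemma HH_deriv {h g : Plane → ℝ} (hh : Continuous h) (hhc : HasCompactSupport h)
    (hg : Continuous g) (hgc : HasCompactSupport g) {t₀ : ℝ} (ht : 0 < t₀) :
    HasDerivAt (HH h g) (∫ x, 2 * ((cv h (Kdd false t₀) x + cv h (Kdd true t₀) x) * cv g (KK t₀) x)) t₀ := by
  have hI : Icc (t₀/2) (2*t₀) ∈ nhds t₀ := Icc_mem_nhds (by linarith) (by linarith)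
  have lo : 0 < t₀ / 2 := by linarith
  have tpos : ∀ t ∈ Icc (t₀/2) (2*t₀), 0 < t := fun t h => lo.trans_le h.1
  obtain ⟨uh, uh'⟩ := cv_UGB hh hhc (hi := 2 * t₀) lo
  obtain ⟨ug, ug'⟩ := cv_UGB hg hgc (hi := 2 * t₀) lo
  have c1 := fun t => cv_cont hh hhc (KK_cont t)
  have c2 := fun t => cv_cont hg hgc (KK_cont t)
  have c3 := fun i t => cv_cont hh hhc (Kd_cont i t)
  have c4 := fun i t => cv_cont hg hgc (Kd_cont i t)
  have c5 := fun i t => cv_cont hh hhc (Kdd_cont i t)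
  have c6 := fun i t => cv_cont hg hgc (Kdd_cont i t)
  have := evol (b := fun t x => cv h (KK t) x * cv g (KK t) x)
    (bt := fun t x => (cv h (Kdd false t) x + cv h (Kdd true t) x) * cv g (KK t) x +
      cv h (KK t) x * (cv g (Kdd false t) x + cv g (Kdd true t) x))
    (b1 := fun i t x => cv h (KK t) x * cv g (Kd i t) x + - (cv h (Kd i t) x * cv g (KK t) x))
    (b2 := fun i t x => cv h (KK t) x * cv g (Kdd i t) x + - (cv h (Kdd i t) x * cv g (KK t) x))
    hI (uh.mul ug) ((((uh' false).2.add (uh' true).2).mul ug).add (uh.mul ((ug' false).2.add (ug' true).2)))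
    (fun i => (uh.mul (ug' i).1).add ((uh' i).1.mul ug).neg)
    (fun i => (uh.mul (ug' i).2).add ((uh' i).2.mul ug).neg)
    (fun t _ => by have := c1 t; have := c2 t; fun_prop)
    (fun t _ => by
      have := c1 t; have := c2 t; have := c5 false t; have := c5 true t
      have := c6 false t; have := c6 true t; fun_prop)
    (fun i t _ => by have := c1 t; have := c2 t; have := c3 i t; have := c4 i t; fun_prop)
    (fun i t _ => by have := c1 t; have := c2 t; have := c5 i t; have := c6 i t; fun_prop)
    (fun t ht x => (cv_time hh hhc (tpos t ht) x).mul (cv_time hg hgc (tpos t ht) x))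
    (fun i t ht x => by
      have l1 := lin_line hh hhc t i x
      have l2 := lin_line hg hgc t i x
      have l3 := lin_line2 hh hhc t i x
      have l4 := lin_line2 hg hgc t i x
      unfold HasLineDerivAt at *
      have := (l1.mul l4).add (l3.mul l2).neg
      simp only [zero_smul, add_zero] at this
      convert! this using 1
      ring)
  convert! this using 1
  congr 1
  ext x
  ring

/-- main pairing: `Δh = σ ∂_k ∂_i ω`. -/
lemma HH_main {h ω m m' g : Plane → ℝ} {h1 h2 : Bool → Plane → ℝ} {i k : Bool} {σ : ℝ} (hσ : |σ| = 1)
    (hh : Continuous h) (hhc : HasCompactSupport h)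
    (hh1 : ∀ j, Continuous (h1 j)) (hh1c : ∀ j, HasCompactSupport (h1 j))
    (hh2 : ∀ j, Continuous (h2 j)) (hh2c : ∀ j, HasCompactSupport (h2 j))
    (hω : Continuous ω) (hωc : HasCompactSupport ω)
    (hm : Continuous m) (hmc : HasCompactSupport m)
    (hm' : Continuous m') (hmc' : HasCompactSupport m')
    (l1 : ∀ j x, HasLineDerivAt ℝ h (h1 j x) x (dir j))
    (l2 : ∀ j x, HasLineDerivAt ℝ (h1 j) (h2 j x) x (dir j))
    (l3 : ∀ x, HasLineDerivAt ℝ ω (m x) x (dir i))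
    (l4 : ∀ x, HasLineDerivAt ℝ m (m' x) x (dir k))
    (hlap : ∀ x, h2 false x + h2 true x = σ * m' x)
    (hg : Continuous g) (hgc : HasCompactSupport g) {t : ℝ} (ht : 0 < t) :
    ∃ D, HasDerivAt (HH h g) D t ∧ |D| ≤ 2 * ∫ x, |cv ω (Kd i t) x| * |cv g (Kd k t) x| := by
  refine ⟨_, HH_deriv hh hhc hg hgc ht, ?_⟩
  have e1 : ∀ j, cv h (Kdd j t) = cv (h2 j) (KK t) := fun j => by
    rw [cv_comm (hh1 j) (hh1c j) (hh2 j) (hh2c j) (l2 j) (KK_cont t) (Kd_cont j t) (KK_line j t),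
      cv_comm hh hhc (hh1 j) (hh1c j) (l1 j) (Kd_cont j t) (Kdd_cont j t) (Kd_line j t)]
  have e2 : cv m' (KK t) = cv m (Kd k t) :=
    cv_comm hm hmc hm' hmc' l4 (KK_cont t) (Kd_cont k t) (KK_line k t)
  have e3 : cv m (KK t) = cv ω (Kd i t) :=
    cv_comm hω hωc hm hmc l3 (KK_cont t) (Kd_cont i t) (KK_line i t)
  have e4 : ∀ x, cv h (Kdd false t) x + cv h (Kdd true t) x = σ * cv m (Kd k t) x := by
    intro x
    rw [e1, e1, ← e2]
    unfold cv
    rw [← integral_add (cv_int (hh2 false) (hh2c false) (KK_cont t) x)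
      (cv_int (hh2 true) (hh2c true) (KK_cont t) x), ← integral_const_mul]
    congr 1
    ext y
    rw [← add_mul, hlap]; ring
  have um := cv_UGB hm hmc (hi := t) ht
  have ug := cv_UGB hg hgc (hi := t) ht
  have ti : t ∈ Icc t t := ⟨le_rfl, le_rfl⟩
  have ib := ibp_mul (F := cv g (KK t)) (F' := cv g (Kd k t)) (G := cv m (KK t)) (G' := cv m (Kd k t))
    (v := dir k)
    (((ug.2 k).1.mul um.1).integrable ti ((cv_cont hg hgc (Kd_cont k t)).mul (cv_cont hm hmc (KK_cont t))))
    ((ug.1.mul (um.2 k).1).integrable ti ((cv_cont hg hgc (KK_cont t)).mul (cv_cont hm hmc (Kd_cont k t))))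
    ((ug.1.mul um.1).integrable ti ((cv_cont hg hgc (KK_cont t)).mul (cv_cont hm hmc (KK_cont t))))
    (fun x => cv_line hg hgc (KK_cont t) (Kd_cont k t) (KK_line k t) x)
    (fun x => cv_line hm hmc (KK_cont t) (Kd_cont k t) (KK_line k t) x)
  have e5 : ∫ x, 2 * ((cv h (Kdd false t) x + cv h (Kdd true t) x) * cv g (KK t) x) =
      -(2 * σ) * ∫ x, cv g (Kd k t) x * cv ω (Kd i t) x := by
    rw [← e3, neg_mul, ← mul_neg, ← ib, ← integral_const_mul]
    congr 1
    ext x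
    rw [e4]; ring
  rw [e5, abs_mul, abs_neg, abs_mul, hσ, mul_one, abs_two]
  refine mul_le_mul_of_nonneg_left (abs_integral_le_integral_abs.trans (le_of_eq ?_)) (by norm_num)
  congr 1
  ext x
  rw [abs_mul, mul_comm]

/-- `h` is obtained from `ω` by a second order Riesz transform, in heat-flow form. -/
def RieszRel (h ω : Plane → ℝ) : Prop :=
  Continuous h ∧ HasCompactSupport h ∧ Continuous ω ∧ HasCompactSupport ω ∧ ∃ i k : Bool,
    ∀ g : Plane → ℝ, Continuous g → HasCompactSupport g → ∀ t, 0 < t → ∃ D : ℝ,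
      HasDerivAt (HH h g) D t ∧ |D| ≤ 2 * ∫ x, |cv ω (Kd i t) x| * |cv g (Kd k t) x|

lemma RieszRel.ge2 {h ω : Plane → ℝ} (H : RieszRel h ω) {p : ℝ} (hp : 2 ≤ p) {g : Plane → ℝ}
    (hg : Continuous g) (hgc : HasCompactSupport g) :
    |∫ x, h x * g x| ≤ 2 * (∫ x, |ω x| ^ p) + 10 * p * ∫ x, |g x| ^ (p / (p - 1)) := by
  obtain ⟨hh, hhc, hω, hωc, i, k, hD⟩ := H
  choose! D hD1 using hD g hg hgc
  exact bil hp hω hωc hg hgc (fun t ht => (hD1 t ht).1) (fun t ht => (hD1 t ht).2)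
    (HH_zero hh hhc hg hgc) (HH_infty hh hhc hg hgc)

lemma RieszRel.le2 {h ω : Plane → ℝ} (H : RieszRel h ω) {p : ℝ} (hp1 : 1 < p) (hp : p ≤ 2) {g : Plane → ℝ}
    (hg : Continuous g) (hgc : HasCompactSupport g) :
    |∫ x, h x * g x| ≤ 10 * (p / (p - 1)) * (∫ x, |ω x| ^ p) + 2 * ∫ x, |g x| ^ (p / (p - 1)) := by
  obtain ⟨hh, hhc, hω, hωc, i, k, hD⟩ := H
  choose! D hD1 using hD g hg hgc
  have p0 : 0 < p - 1 := by linarith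
  have q2 : 2 ≤ p / (p - 1) := by rw [le_div_iff₀ p0]; linarith
  have e : p / (p - 1) / (p / (p - 1) - 1) = p := by
    have : p / (p - 1) - 1 = 1 / (p - 1) := by field_simp; ring
    rw [this]; field_simp
  have := bil (i := k) (k := i) q2 hg hgc hω hωc (fun t ht => (hD1 t ht).1)
    (fun t ht => (hD1 t ht).2.trans (le_of_eq (by simp only [mul_comm])))
    (HH_zero hh hhc hg hgc) (HH_infty hh hhc hg hgc)
  rw [e] at this
  linarith

lemma lp_dual {h : Plane → ℝ} (hh : Continuous h) (hhc : HasCompactSupport h) {p a b W : ℝ}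
    (hp : 1 < p) (hb : 0 < b)
    (H : ∀ g : Plane → ℝ, Continuous g → HasCompactSupport g →
      |∫ x, h x * g x| ≤ a * W + b * ∫ x, |g x| ^ (p / (p - 1))) :
    ∫ x, |h x| ^ p ≤ 2 * a * (2 * b) ^ (p - 1) * W := by
  have p0 : 0 < p - 1 := by linarith
  set κ := (2 * b) ^ (-(p - 1)) with hκ
  have k0 : 0 < κ := by positivity
  set γ : ℝ → ℝ := fun s => κ * ((max s 0) ^ (p - 1) - (max (-s) 0) ^ (p - 1)) with hγ
  have γc : Continuous γ := by
    apply Continuous.mul continuous_const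
    exact ((continuous_id.max continuous_const).rpow_const (fun _ => Or.inr p0.le)).sub
      ((continuous_neg.max continuous_const).rpow_const (fun _ => Or.inr p0.le))
  have γ0 : γ 0 = 0 := by simp [hγ]
  have g1 : ∀ s, s * γ s = κ * |s| ^ p := by
    intro s
    simp only [hγ]
    rcases le_total 0 s with hs | hs
    · rw [max_eq_left hs, max_eq_right (by linarith), abs_of_nonneg hs, Real.zero_rpow p0.ne', sub_zero]
      rcases hs.eq_or_lt with h | h
      · subst h; simp [Real.zero_rpow (by linarith : p ≠ 0)]
      · rw [Real.rpow_sub_one h.ne']; field_simp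
    · rw [max_eq_right hs, max_eq_left (by linarith), abs_of_nonpos hs, Real.zero_rpow p0.ne', zero_sub]
      rcases hs.eq_or_lt with h | h
      · subst h; simp [Real.zero_rpow (by linarith : p ≠ 0)]
      · have hs0 : s ≠ 0 := h.ne
        rw [Real.rpow_sub_one (by linarith)]; field_simp
  have g2 : ∀ s, |γ s| ^ (p / (p - 1)) = κ ^ (p / (p - 1)) * |s| ^ p := by
    intro s
    have : |γ s| = κ * |s| ^ (p - 1) := by
      simp only [hγ]
      rcases le_total 0 s with hs | hs
      · rw [max_eq_left hs, max_eq_right (by linarith), abs_of_nonneg hs, Real.zero_rpow p0.ne', sub_zero,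
          abs_of_nonneg (by positivity)]
      · rw [max_eq_right hs, max_eq_left (by linarith), abs_of_nonpos hs, Real.zero_rpow p0.ne', zero_sub,
          abs_mul, abs_neg, abs_of_pos k0, abs_of_nonneg (Real.rpow_nonneg (by linarith) _)]
    rw [this, Real.mul_rpow k0.le (by positivity), ← Real.rpow_mul (abs_nonneg _)]
    congr 2
    field_simp
  have := H (fun x => γ (h x)) (γc.comp hh) (hhc.comp_left γ0)
  simp only [g1, g2, integral_const_mul] at this
  set X := ∫ x, |h x| ^ p with hX
  have X0 : 0 ≤ X := integral_nonneg fun x => Real.rpow_nonneg (abs_nonneg _) _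
  rw [abs_of_nonneg (by positivity)] at this
  have e1 : κ ^ (p / (p - 1)) = κ * (2 * b)⁻¹ := by
    have : p / (p - 1) = 1 + 1 / (p - 1) := by field_simp; ring
    rw [this, Real.rpow_add k0, Real.rpow_one, hκ, ← Real.rpow_mul (by positivity)]
    congr 1
    rw [show -(p - 1) * (1 / (p - 1)) = -1 by field_simp, Real.rpow_neg_one]
  rw [e1] at this
  have e2 : b * (κ * (2 * b)⁻¹ * X) = κ * X / 2 := by field_simp
  rw [e2] at this
  have e3 : κ * (2 * b) ^ (p - 1) = 1 := by
    rw [hκ, ← Real.rpow_add (by positivity)]; simp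
  have h4 : κ * X ≤ 2 * a * W := by linarith
  have h5 := mul_le_mul_of_nonneg_right h4 (by positivity : 0 ≤ (2 * b) ^ (p - 1))
  calc X = (κ * (2 * b) ^ (p - 1)) * X := by rw [e3, one_mul]
    _ = κ * X * (2 * b) ^ (p - 1) := by ring
    _ ≤ _ := h5
    _ = _ := by ring

lemma RieszRel.lp {h ω : Plane → ℝ} (H : RieszRel h ω) {p : ℝ} (hp : 1 < p) :
    ∫ x, |h x| ^ p ≤ (20 * (p ^ 2 / (p - 1))) ^ p * ∫ x, |ω x| ^ p := by
  have p0 : 0 < p - 1 := by linarith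
  have W0 : 0 ≤ ∫ x, |ω x| ^ p := integral_nonneg fun x => Real.rpow_nonneg (abs_nonneg _) _
  have hA : p ≤ p ^ 2 / (p - 1) := by rw [le_div_iff₀ p0]; nlinarith
  have hB : p / (p - 1) ≤ p ^ 2 / (p - 1) := by
    apply div_le_div_of_nonneg_right _ p0.le; nlinarith
  set A := p ^ 2 / (p - 1)
  have A1 : 1 ≤ A := by linarith
  have eA : (20 * A) * (20 * A) ^ (p - 1) = (20 * A) ^ p := by
    rw [Real.rpow_sub_one (by positivity)]; field_simp
  rcases le_total 2 p with h2 | h2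
  · refine (lp_dual H.1 H.2.1 hp (by positivity : 0 < 10 * p) (fun g hg hgc => H.ge2 h2 hg hgc)).trans ?_
    refine mul_le_mul_of_nonneg_right ?_ W0
    rw [← eA]
    refine mul_le_mul (by linarith) (Real.rpow_le_rpow (by positivity) (by linarith) p0.le) (by positivity) (by positivity)
  · refine (lp_dual H.1 H.2.1 hp (by norm_num : (0:ℝ) < 2) (fun g hg hgc => H.le2 hp h2 hg hgc)).trans ?_
    refine mul_le_mul_of_nonneg_right ?_ W0
    rw [← eA]
    refine mul_le_mul (by linarith) (Real.rpow_le_rpow (by positivity) (by linarith) p0.le) (by positivity) (by positivity)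

lemma RieszRel.eLp {h ω : Plane → ℝ} (H : RieszRel h ω) {p : ℝ} (hp : 1 < p) :
    eLpNorm h (ENNReal.ofReal p) volume ≤ ENNReal.ofReal (20 * (p ^ 2 / (p - 1))) *
      eLpNorm ω (ENNReal.ofReal p) volume := by
  have p0 : 0 < p := by linarith
  have p1 : 0 < p - 1 := by linarith
  have n0 : ENNReal.ofReal p ≠ 0 := by simpa using p0
  have ni : ENNReal.ofReal p ≠ ⊤ := ENNReal.ofReal_ne_top
  rw [(H.1.memLp_of_hasCompactSupport H.2.1).eLpNorm_eq_integral_rpow_norm n0 ni,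
    (H.2.2.1.memLp_of_hasCompactSupport H.2.2.2.1).eLpNorm_eq_integral_rpow_norm n0 ni,
    ENNReal.toReal_ofReal p0.le, ← ENNReal.ofReal_mul (by positivity)]
  apply ENNReal.ofReal_le_ofReal
  simp only [Real.norm_eq_abs]
  have W0 : 0 ≤ ∫ x, |ω x| ^ p := integral_nonneg fun x => Real.rpow_nonneg (abs_nonneg _) _
  have X0 : 0 ≤ ∫ x, |h x| ^ p := integral_nonneg fun x => Real.rpow_nonneg (abs_nonneg _) _
  refine (Real.rpow_le_rpow X0 (H.lp hp) (by positivity : 0 ≤ p⁻¹)).trans (le_of_eq ?_)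
  rw [Real.mul_rpow (by positivity) W0, Real.rpow_rpow_inv (by positivity) p0.ne']

/-- test functions -/
def TF (f : Plane → ℝ) : Prop := ContDiff ℝ (⊤ : ℕ∞) f ∧ HasCompactSupport f
/-- partial derivative -/
def dd (i : Bool) (f : Plane → ℝ) (x : Plane) : ℝ := fderiv ℝ f x (dir i)

lemma TF.dd {f : Plane → ℝ} (h : TF f) (i : Bool) : TF (dd i f) := by
  refine ⟨?_, ?_⟩
  · have : ContDiff ℝ (⊤ : ℕ∞) (fderiv ℝ f) := h.1.fderiv_right (by simp)
    exact this.clm_apply contDiff_const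
  · exact h.2.fderiv_apply ℝ (dir i)

lemma TF.diff {f : Plane → ℝ} (h : TF f) : Differentiable ℝ f := h.1.differentiable (by simp)

lemma TF.line {f : Plane → ℝ} (h : TF f) (i : Bool) (x : Plane) :
    HasLineDerivAt ℝ f (_root_.dd i f x) x (dir i) :=
  (h.diff x).hasFDerivAt.hasLineDerivAt (dir i)

lemma dd_comm {f : Plane → ℝ} (h : TF f) (i j : Bool) : dd i (dd j f) = dd j (dd i f) := by
  ext x
  have hd : DifferentiableAt ℝ (fderiv ℝ f) x := by
    have : ContDiff ℝ (⊤ : ℕ∞) (fderiv ℝ f) := h.1.fderiv_right (by simp)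
    exact (this.differentiable (by simp)) x
  have key : ∀ i j, dd i (dd j f) x = fderiv ℝ (fderiv ℝ f) x (dir i) (dir j) := by
    intro i j
    unfold dd
    rw [fderiv_clm_apply hd (differentiableAt_const _)]
    simp
  rw [key, key]
  have : IsSymmSndFDerivAt ℝ f x := (h.1.contDiffAt).isSymmSndFDerivAt
    (by simp only [minSmoothness_of_isRCLikeNormedField]; exact WithTop.coe_le_coe.2 (le_top : (2 : ℕ∞) ≤ ⊤))
  exact this _ _

lemma rel_of {h ω : Plane → ℝ} (hh : TF h) (hω : TF ω) {i k : Bool} {σ : ℝ} (hσ : |σ| = 1)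
    (hl : ∀ x, dd false (dd false h) x + dd true (dd true h) x = σ * dd k (dd i ω) x) : RieszRel h ω := by
  refine ⟨hh.1.continuous, hh.2, hω.1.continuous, hω.2, i, k, fun g hg hgc t ht => ?_⟩
  exact HH_main (h1 := fun j => dd j h) (h2 := fun j => dd j (dd j h)) (m := dd i ω)
    (m' := dd k (dd i ω)) hσ hh.1.continuous hh.2 (fun j => (hh.dd j).1.continuous)
    (fun j => (hh.dd j).2) (fun j => ((hh.dd j).dd j).1.continuous) (fun j => ((hh.dd j).dd j).2)
    hω.1.continuous hω.2 (hω.dd i).1.continuous (hω.dd i).2 ((hω.dd i).dd k).1.continuous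
    ((hω.dd i).dd k).2 (fun j x => hh.line j x) (fun j x => (hh.dd j).line j x)
    (fun x => hω.line i x) (fun x => (hω.dd i).line k x) hl hg hgc ht

lemma dd_sub {f g : Plane → ℝ} (hf : TF f) (hg : TF g) (i : Bool) :
    dd i (fun x => f x - g x) = fun x => dd i f x - dd i g x := by
  ext x
  unfold dd
  rw [fderiv_fun_sub (hf.diff x) (hg.diff x)]
  rfl

lemma dd_neg {f : Plane → ℝ} (i : Bool) : dd i (fun x => - f x) = fun x => - dd i f x := by
  ext x
  unfold dd
  rw [fderiv_fun_neg]
  rfl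

lemma grad_rel {a b : Plane → ℝ} (ha : TF a) (hb : TF b)
    (hdiv : ∀ x, dd false a x + dd true b x = 0) (i : Bool) :
    RieszRel (dd i a) (fun x => dd false b x - dd true a x) ∧
    RieszRel (dd i b) (fun x => dd false b x - dd true a x) := by
  have hω : TF (fun x => dd false b x - dd true a x) :=
    ⟨(hb.dd false).1.sub (ha.dd true).1, (hb.dd false).2.sub (ha.dd true).2⟩
  have e1 : dd false a = fun x => - dd true b x := by ext x; linarith [hdiv x]
  have e2 : dd true b = fun x => - dd false a x := by ext x; linarith [hdiv x]
  have c : ∀ (f : Plane → ℝ), TF f → ∀ j, dd j (dd j (dd i f)) = dd i (dd j (dd j f)) := by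
    intro f hf j
    rw [dd_comm hf j i, dd_comm (hf.dd j) j i]
  constructor
  · refine rel_of (ha.dd i) hω (i := i) (k := true) (σ := -1) (by simp) fun x => ?_
    rw [dd_comm hω true i, dd_sub (hb.dd false) (ha.dd true),
      dd_sub ((hb.dd false).dd true) ((ha.dd true).dd true), c a ha, c a ha]
    have : dd false (dd false a) = fun x => - dd true (dd false b) x := by
      rw [e1, dd_neg, dd_comm hb true false]
    rw [this, dd_neg]
    ring
  · refine rel_of (hb.dd i) hω (i := i) (k := false) (σ := 1) (by simp) fun x => ?_
    rw [dd_comm hω false i, dd_sub (hb.dd false) (ha.dd true),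
      dd_sub ((hb.dd false).dd false) ((ha.dd true).dd false), c b hb, c b hb]
    have : dd true (dd true b) = fun x => - dd false (dd true a) x := by
      rw [e2, dd_neg, dd_comm ha true false]
    rw [this, dd_neg]
    ring

/-- Yudovich's Calderón–Zygmund estimate (6.5):
there is an absolute constant `c > 0` such that for every `1 < p < ∞` and
every divergence-free `u ∈ C_c^∞(ℝ²;ℝ²)`,
`‖∇u‖_{L^p} ≤ c·(p²/(p−1))·‖curl u‖_{L^p}`. -/
theorem statement19 :
    ∃ c : ℝ, 0 < c ∧
      ∀ p : ℝ, 1 < p →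
        ∀ u : Plane → Plane,
          ContDiff ℝ (⊤ : ℕ∞) u → HasCompactSupport u →
          (∀ x, diverg u x = 0) →
          eLpNorm (fun x => Real.sqrt (gradSq u x)) (ENNReal.ofReal p) volume
            ≤ ENNReal.ofReal (c * p ^ 2 / (p - 1)) *
              eLpNorm (fun x => curl2 u x) (ENNReal.ofReal p) volume := by
  refine ⟨80, by norm_num, fun p hp u hu huc hdiv => ?_⟩
  have ha : TF (fun x => (u x).1) := ⟨hu.fst, huc.comp_left (g := Prod.fst) rfl⟩
  have hb : TF (fun x => (u x).2) := ⟨hu.snd, huc.comp_left (g := Prod.snd) rfl⟩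
  have ud : Differentiable ℝ u := hu.differentiable (by simp)
  have f1 : ∀ x v, (fderiv ℝ u x v).1 = fderiv ℝ (fun x => (u x).1) x v := by
    intro x v
    rw [(ud x).hasFDerivAt.fst.fderiv]; rfl
  have f2 : ∀ x v, (fderiv ℝ u x v).2 = fderiv ℝ (fun x => (u x).2) x v := by
    intro x v
    rw [(ud x).hasFDerivAt.snd.fderiv]; rfl
  set a : Plane → ℝ := fun x => (u x).1 with hadef
  set b : Plane → ℝ := fun x => (u x).2 with hbdef
  have hdv : ∀ x, dd false a x + dd true b x = 0 := by
    intro x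
    have := hdiv x
    unfold diverg at this
    rw [f1, f2] at this
    exact this
  have hcurl : (fun x => curl2 u x) = fun x => dd false b x - dd true a x := by
    ext x
    unfold curl2
    rw [f1, f2]; rfl
  have hgr : ∀ x, Real.sqrt (gradSq u x) ≤ |dd false a x| + |dd false b x| + |dd true a x| + |dd true b x| := by
    intro x
    apply Real.sqrt_le_iff.2 ⟨by positivity, ?_⟩
    have : gradSq u x = |dd false a x| ^ 2 + |dd false b x| ^ 2 + |dd true a x| ^ 2 + |dd true b x| ^ 2 := by
      unfold gradSq nsq
      rw [f1, f2, f1, f2]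
      simp only [sq_abs]
      change dd false a x ^ 2 + dd false b x ^ 2 + (dd true a x ^ 2 + dd true b x ^ 2) = _
      ring
    rw [this]
    have m1 := abs_nonneg (dd false a x)
    have m2 := abs_nonneg (dd false b x)
    have m3 := abs_nonneg (dd true a x)
    have m4 := abs_nonneg (dd true b x)
    nlinarith [mul_nonneg m1 m2, mul_nonneg m1 m3, mul_nonneg m1 m4, mul_nonneg m2 m3,
      mul_nonneg m2 m4, mul_nonneg m3 m4]
  rw [hcurl]
  set ω : Plane → ℝ := fun x => dd false b x - dd true a x
  have r1 := ((grad_rel ha hb hdv false).1).eLp hp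
  have r2 := ((grad_rel ha hb hdv false).2).eLp hp
  have r3 := ((grad_rel ha hb hdv true).1).eLp hp
  have r4 := ((grad_rel ha hb hdv true).2).eLp hp
  have p1 : 1 ≤ ENNReal.ofReal p := by simpa using hp.le
  have me : ∀ i (f : Plane → ℝ), TF f → AEStronglyMeasurable (fun x => |dd i f x|) volume :=
    fun i f hf => ((hf.dd i).1.continuous.abs).aestronglyMeasurable
  have nn : ∀ f : Plane → ℝ, eLpNorm (fun x => |f x|) (ENNReal.ofReal p) volume =
      eLpNorm f (ENNReal.ofReal p) volume := fun f => eLpNorm_norm f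
  have q0 : 0 ≤ p ^ 2 / (p - 1) := div_nonneg (by positivity) (by linarith)
  have t1 : eLpNorm (fun x => Real.sqrt (gradSq u x)) (ENNReal.ofReal p) volume ≤
      eLpNorm (fun x => |dd false a x| + |dd false b x| + |dd true a x| + |dd true b x|)
        (ENNReal.ofReal p) volume := by
    refine eLpNorm_mono_real fun x => ?_
    rw [Real.norm_eq_abs, abs_of_nonneg (Real.sqrt_nonneg _)]
    exact hgr x
  have t2 := eLpNorm_add_le ((me false a ha).add (me false b hb) |>.add (me true a ha)) (me true b hb) p1
  have t3 := eLpNorm_add_le ((me false a ha).add (me false b hb)) (me true a ha) p1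
  have t4 := eLpNorm_add_le (me false a ha) (me false b hb) p1
  rw [nn, nn] at t4
  rw [nn] at t3 t2
  have e : ENNReal.ofReal (80 * p ^ 2 / (p - 1)) = ENNReal.ofReal (20 * (p ^ 2 / (p - 1))) +
      ENNReal.ofReal (20 * (p ^ 2 / (p - 1))) + ENNReal.ofReal (20 * (p ^ 2 / (p - 1))) +
      ENNReal.ofReal (20 * (p ^ 2 / (p - 1))) := by
    rw [← ENNReal.ofReal_add (by positivity) (by positivity),
      ← ENNReal.ofReal_add (by positivity) (by positivity),
      ← ENNReal.ofReal_add (by positivity) (by positivity)]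
    congr 1; ring
  rw [e, add_mul, add_mul, add_mul]
  refine t1.trans (t2.trans (add_le_add (t3.trans (add_le_add (t4.trans (add_le_add ?_ ?_)) ?_)) ?_))
  · exact r1
  · exact r2
  · exact r3
  · exact r4
end
end
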